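/- (Bessis) Let W be a finite Coxeter group and γ ∈ W a Coxeter element. Then the poset group Γ(W,γ) is isomorphic (as a group) to the Artin group A(W,S) associated to the Coxeter system (W,S). -/

import Mathlib

/-!
It suffices to treat `γ = s₁ ⋯ sₙ`, the product of the simple reflections in the order of a list
`l`: conjugation by `v` identifies the poset groups of `γ` and `v γ v⁻¹`.

*From the Artin group to the poset group.* If `sᵢ` precedes `sⱼ` in `l`, then `sᵢ sⱼ ≤ γ`, and the
relations of the rank two interval `[1, sᵢ sⱼ]` imply the braid relation between `⟨sᵢ⟩` and `⟨sⱼ⟩`.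
This gives `ψ : A → Γ`. It is onto: every positive root is reached from a simple one by rotating the
word `l` and reflecting the root at the same time, since otherwise its orbit under the Coxeter
element would consist of positive roots and have a nonzero sum fixed by the Coxeter element. Each
step of this process is a rank two relation in the poset group.

*From the poset group to the Artin group.* By Matsumoto's theorem each `w : W` has a positive lift
`λ(w)` in the Artin group. More generally, `λ(tu) λ(u)⁻¹` is a lift of `t` which depends only on the
side of the chamber of `u` with respect to the walls inverted by `t`. For a reflection `t` with root
`β`, the chamber is chosen according to the sign of `ω(·, β)`, where `ω` is the alternating form
obtained from the invariant symmetric form and the ordering `l`. The resulting lift `φ_l(t)` has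
three properties: `φ_l(s)` is the standard generator for `s` simple; `φ_l` restricts to standard
parabolic subgroups; and rotating `l` conjugates `φ_l` by a standard generator. By induction on the
rank, these imply that for *every* minimal factorization of `γ` into reflections `t₁ ⋯ tₙ`, the
product `φ_l(t₁) ⋯ φ_l(tₙ)` is the product of the standard generators in the order `l`: rotating
until the first factor is the first simple reflection of the word, the other factors lie in a
parabolic subgroup of smaller rank, by a dimension count on moved spaces. Hence the product of the
lifts along a reduced factorization of `w ∈ [1, γ]` depends only on `w`, which defines `θ : Γ → A`
with `θ ψ = id`. So `ψ` is bijective.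
-/

variable {B : Type*} {W : Type*} [Group W] {M : CoxeterMatrix B}

/-- The reflection length of `w`: the least `k` such that `w` is a product of `k`
reflections (conjugates of simple reflections). -/
noncomputable def rlen (cs : CoxeterSystem M W) (w : W) : ℕ :=
  sInf {k | ∃ l : List W, (∀ t ∈ l, cs.IsReflection t) ∧ l.length = k ∧ l.prod = w}

/-- The reflection (absolute) order on `W`: `u ≤ w` iff `ℓ(w) = ℓ(u) + ℓ(u⁻¹w)`. -/
def rle (cs : CoxeterSystem M W) (u w : W) : Prop :=
  rlen cs w = rlen cs u + rlen cs (u⁻¹ * w)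

/-- A Coxeter element: a conjugate of a product of all the simple reflections,
each occurring exactly once, in some order. -/
def IsCoxeterElement [Fintype B] (cs : CoxeterSystem M W) (γ : W) : Prop :=
  ∃ (v : W) (l : List B), l.Nodup ∧ (∀ i : B, i ∈ l) ∧ γ = v * cs.wordProd l * v⁻¹

/-- The generating set of the poset group/monoid: the interval `[1,γ]` minus the identity. -/
abbrev NCGen (cs : CoxeterSystem M W) (γ : W) : Type _ :=
  {w : W // w ≠ 1 ∧ rle cs w γ}

/-- The defining relations of the positive monoid `Γ₊(W,γ)`:
`⟨w₁⟩⟨w₂⟩ = ⟨w₃⟩` whenever `w₁w₂ = w₃` in `W` and `ℓ(w₁) + ℓ(w₂) = ℓ(w₃)`. -/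
def posRels (cs : CoxeterSystem M W) (γ : W) :
    FreeMonoid (NCGen cs γ) → FreeMonoid (NCGen cs γ) → Prop :=
  fun x y => ∃ w₁ w₂ w₃ : NCGen cs γ,
    x = FreeMonoid.of w₁ * FreeMonoid.of w₂ ∧ y = FreeMonoid.of w₃ ∧
    (w₁ : W) * (w₂ : W) = (w₃ : W) ∧
    rlen cs (w₁ : W) + rlen cs (w₂ : W) = rlen cs (w₃ : W)

/-- The positive monoid `Γ₊(W,γ)`, presented by the generators `⟨w⟩`, `w ∈ [1,γ] \ {1}`,
and the relations `posRels`. -/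
abbrev PosMonoid (cs : CoxeterSystem M W) (γ : W) := PresentedMonoid (posRels cs γ)

open Classical in
/-- The generator `⟨w⟩` of `Γ₊(W,γ)` for `w ∈ [1,γ]`, interpreting `⟨1⟩` as the
identity of the monoid (and defaulting to the identity off the interval). -/
noncomputable def pgen (cs : CoxeterSystem M W) (γ : W) (w : W) : PosMonoid cs γ :=
  if h : w ≠ 1 ∧ rle cs w γ then PresentedMonoid.of (posRels cs γ) ⟨w, h⟩ else 1

/-- The defining relations of the poset group `Γ(W,γ)`:
`⟨w₁⟩⟨w₂⟩ = ⟨w₃⟩` whenever `w₁w₂ = w₃` in `W` and `ℓ(w₁) + ℓ(w₂) = ℓ(w₃)`. -/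
def posetGroupRels (cs : CoxeterSystem M W) (γ : W) : Set (FreeGroup (NCGen cs γ)) :=
  {x | ∃ w₁ w₂ w₃ : NCGen cs γ,
    x = FreeGroup.of w₁ * FreeGroup.of w₂ * (FreeGroup.of w₃)⁻¹ ∧
    (w₁ : W) * (w₂ : W) = (w₃ : W) ∧
    rlen cs (w₁ : W) + rlen cs (w₂ : W) = rlen cs (w₃ : W)}

/-- The poset group `Γ(W,γ)`, presented by the generators `⟨w⟩`, `w ∈ [1,γ] \ {1}`,
and the relations `posetGroupRels`. -/
abbrev PosetGroup (cs : CoxeterSystem M W) (γ : W) := PresentedGroup (posetGroupRels cs γ)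

/-- The canonical monoid homomorphism `Γ₊(W,γ) → Γ(W,γ)`, induced by sending each
generator `⟨w⟩` of the monoid presentation to the corresponding group generator. -/
def canHom (cs : CoxeterSystem M W) (γ : W) : PosMonoid cs γ →* PosetGroup cs γ :=
  PresentedMonoid.lift (fun x => PresentedGroup.of (rels := posetGroupRels cs γ) x) (by
    intro a b hab
    obtain ⟨w₁, w₂, w₃, ha, hb, hmul, hlen⟩ := hab
    subst ha hb
    have hmem : FreeGroup.of w₁ * FreeGroup.of w₂ * (FreeGroup.of w₃)⁻¹ ∈
        posetGroupRels cs γ := ⟨w₁, w₂, w₃, rfl, hmul, hlen⟩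
    have h1 : (PresentedGroup.of (rels := posetGroupRels cs γ) w₁) *
        PresentedGroup.of w₂ * (PresentedGroup.of w₃)⁻¹ = 1 :=
      (QuotientGroup.eq_one_iff _).mpr (Subgroup.subset_normalClosure hmem)
    have h2 : (PresentedGroup.of (rels := posetGroupRels cs γ) w₁) *
        PresentedGroup.of w₂ = PresentedGroup.of w₃ := mul_inv_eq_one.mp h1
    simpa using h2)

/-- The braid relations of the Artin group of the Coxeter matrix `M`: for each pair
`i ≠ j` with `M i j < ∞` (finiteness is encoded by `M i j ≠ 0`), the two alternating
products `sts⋯` and `tst⋯` of `M i j` letters are equal. -/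
def artinRels (M : CoxeterMatrix B) : Set (FreeGroup B) :=
  {x | ∃ i j : B, i ≠ j ∧ M i j ≠ 0 ∧
    x = ((CoxeterSystem.alternatingWord i j (M i j)).map FreeGroup.of).prod *
        (((CoxeterSystem.alternatingWord j i (M i j)).map FreeGroup.of).prod)⁻¹}

/-- The Artin group associated to the Coxeter matrix `M`. -/
abbrev ArtinGroup (M : CoxeterMatrix B) := PresentedGroup (artinRels M)

namespace DualBraid

open CoxeterSystem

/-! ### The geometric representation -/

section ReflectionOrder

open Polynomial Chebyshev

variable {V : Type*} [AddCommGroup V] [Module ℝ V] {x y : V} {f g : Module.Dual ℝ V}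

lemma reflection_mul_reflection_sq_eq_one (hf : f x = 2) (hg : g y = 2) (hfy : f y = 0)
    (hgx : g x = 0) : (Module.reflection hf * Module.reflection hg) ^ 2 = 1 := by
  ext z
  simp only [pow_two, LinearEquiv.mul_apply, Module.reflection_apply, map_sub, map_smul,
    LinearEquiv.coe_one, id_eq, hf, hg, hfy, hgx]
  module

/-- The Chebyshev coefficients of `(r₁r₂)ᵐ` are quotients of sines, and one factor of each vanishes
according to the parity of `m`. -/
lemma reflection_mul_reflection_pow_eq_one {m : ℕ} (hm : 2 < m) (hf : f x = 2) (hg : g y = 2)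
    (hfg : f y * g x = 4 * Real.cos (Real.pi / m) ^ 2) :
    (Module.reflection hf * Module.reflection hg) ^ m = 1 := by
  have hm' : (2 : ℝ) < m := by exact_mod_cast hm
  set φ := 2 * (Real.pi / m) with hφ
  have hmφ : m * φ = 2 * Real.pi := by rw [hφ]; field_simp
  have ht : 2 * Real.cos φ = f y * g x - 2 := by rw [hfg, hφ, Real.cos_two_mul]; ring
  have hsin : Real.sin φ ≠ 0 := by
    refine (Real.sin_pos_of_pos_of_lt_pi (by positivity) ?_).ne'
    rw [hφ, ← mul_div_assoc, div_lt_iff₀ (by linarith), mul_comm]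
    exact mul_lt_mul_of_pos_left hm' Real.pi_pos
  ext z
  rw [Module.reflection_mul_reflection_pow_apply hf hg m z _ ht]
  obtain ⟨k, rfl | rfl⟩ := m.even_or_odd'
  · have hS : (S ℝ (k - 1)).eval (2 * Real.cos φ) = 0 := by
      apply (mul_eq_zero.mp _).resolve_right hsin
      rw [S_two_mul_real_cos, ← Real.sin_pi]
      push_cast at hmφ ⊢
      congr 1
      linarith
    rw [show (((2 * k : ℕ) : ℤ) - 2) / 2 = k - 1 by omega,
      show (((2 * k : ℕ) : ℤ) - 1) / 2 = k - 1 by omega, hS]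
    simp
  · have hS : (S ℝ k).eval (2 * Real.cos φ) + (S ℝ (k - 1)).eval (2 * Real.cos φ) = 0 := by
      apply (mul_eq_zero.mp _).resolve_right hsin
      rw [add_mul, S_two_mul_real_cos, S_two_mul_real_cos,
        show ((k : ℤ) + 1) * φ = 2 * Real.pi - k * φ by push_cast at hmφ ⊢; linarith,
        Real.sin_two_pi_sub]
      push_cast
      ring_nf
    rw [show (((2 * k + 1 : ℕ) : ℤ) - 2) / 2 = k - 1 by omega,
      show (((2 * k + 1 : ℕ) : ℤ) - 1) / 2 = k by omega,
      show (((2 * k + 1 : ℕ) : ℤ) - 3) / 2 = k - 1 by omega,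
      show ((2 * k + 1 : ℕ) : ℤ) / 2 = k by omega, hS]
    simp

end ReflectionOrder

section GeometricRepresentation

/-- The Gram matrix entry `-cos (π / m)` of two simple roots. For `M i j = 0`, that is `m = ∞`, the
convention `π / 0 = 0` yields the customary value `-1`. -/
noncomputable def gram (M : CoxeterMatrix B) (i j : B) : ℝ := -Real.cos (Real.pi / M i j)

lemma gram_comm (i j : B) : gram M i j = gram M j i := by
  rw [gram, gram, M.symmetric i j]

@[simp] lemma gram_self (i : B) : gram M i i = 1 := by simp [gram]

lemma two_le_of_ne {i j : B} (hij : i ≠ j) (hM : M i j ≠ 0) : 2 ≤ M i j := by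
  have := M.off_diagonal i j hij
  omega

/-- The simple root `α_i`. The geometric representation is realized on `B →₀ ℝ`, so that `x i` is
the coefficient of `α_i` in `x`, and `0 ≤ x` says that `x` is a nonnegative combination of simple
roots. -/
noncomputable def simpleRoot (i : B) : B →₀ ℝ := Finsupp.single i 1

@[simp] lemma simpleRoot_self (i : B) : simpleRoot i i = 1 := by simp [simpleRoot]

lemma simpleRoot_of_ne {i j : B} (h : j ≠ i) : simpleRoot i j = 0 := by simp [simpleRoot, h.symm]

lemma simpleRoot_nonneg (i : B) : 0 ≤ simpleRoot i := Finsupp.single_nonneg.mpr zero_le_one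

lemma simpleRoot_injective : Function.Injective (simpleRoot : B → B →₀ ℝ) :=
  Finsupp.single_left_injective one_ne_zero

/-- The symmetric bilinear form of the geometric representation. -/
noncomputable def rootForm (M : CoxeterMatrix B) : LinearMap.BilinForm ℝ (B →₀ ℝ) :=
  Finsupp.linearCombination ℝ fun i => Finsupp.linearCombination ℝ (gram M i)

@[simp] lemma rootForm_simpleRoot_simpleRoot (i j : B) :
    rootForm M (simpleRoot i) (simpleRoot j) = gram M i j := by
  simp [rootForm, simpleRoot]

lemma rootForm_simpleRoot (i : B) :
    rootForm M (simpleRoot i) = Finsupp.linearCombination ℝ (gram M i) := by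
  simp [rootForm, simpleRoot]

lemma rootForm_comm (x y : B →₀ ℝ) : rootForm M x y = rootForm M y x := by
  have h : rootForm M = (rootForm M).flip := by
    ext i j
    simpa [rootForm] using gram_comm i j
  exact LinearMap.congr_fun₂ h x y

/-- The simple reflection `x ↦ x - 2⟨α_i, x⟩ α_i`. -/
noncomputable def simpleReflection (M : CoxeterMatrix B) (i : B) : (B →₀ ℝ) ≃ₗ[ℝ] (B →₀ ℝ) :=
  Module.reflection (x := simpleRoot i) (f := (2 : ℝ) • rootForm M (simpleRoot i)) (by simp)

lemma simpleReflection_apply (i : B) (x : B →₀ ℝ) :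
    simpleReflection M i x = x - (2 * rootForm M (simpleRoot i) x) • simpleRoot i := by
  simp [simpleReflection, Module.reflection_apply]

lemma simpleReflection_simpleRoot (i j : B) :
    simpleReflection M i (simpleRoot j) = simpleRoot j - (2 * gram M i j) • simpleRoot i := by
  rw [simpleReflection_apply, rootForm_simpleRoot_simpleRoot]

@[simp] lemma simpleReflection_self (i : B) :
    simpleReflection M i (simpleRoot i) = -simpleRoot i :=
  Module.reflection_apply_self _

@[simp] lemma simpleReflection_simpleReflection (i : B) (x : B →₀ ℝ) :
    simpleReflection M i (simpleReflection M i x) = x :=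
  Module.involutive_reflection _ x

lemma simpleReflection_coord {x : B →₀ ℝ} {i j : B} (h : j ≠ i) :
    simpleReflection M i x j = x j := by
  simp [simpleReflection_apply, simpleRoot_of_ne h]

lemma isLiftable_simpleReflection : M.IsLiftable (simpleReflection M) := by
  intro i j
  obtain rfl | hij := eq_or_ne i j
  · ext1 x
    simp
  obtain h0 | h0 := eq_or_ne (M i j) 0
  · simp [h0]
  obtain h2 | h2 := (two_le_of_ne hij h0).eq_or_lt
  · rw [← h2]
    apply reflection_mul_reflection_sq_eq_one
    · simp [gram, ← h2]
    · simp [gram, M.symmetric j i, ← h2]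
  · apply reflection_mul_reflection_pow_eq_one h2
    simp only [LinearMap.smul_apply, rootForm_simpleRoot_simpleRoot, M.symmetric j i, smul_eq_mul,
      gram]
    ring

/-- The geometric representation of the Coxeter group `W`. -/
noncomputable def geomRep (cs : CoxeterSystem M W) : W →* (B →₀ ℝ) ≃ₗ[ℝ] (B →₀ ℝ) :=
  cs.lift ⟨simpleReflection M, isLiftable_simpleReflection⟩

variable (cs : CoxeterSystem M W)

@[simp] lemma geomRep_simple (i : B) : geomRep cs (cs.simple i) = simpleReflection M i :=
  cs.lift_apply_simple isLiftable_simpleReflection i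

lemma geomRep_mul_apply (w v : W) (x : B →₀ ℝ) :
    geomRep cs (w * v) x = geomRep cs w (geomRep cs v x) := by
  rw [map_mul, LinearEquiv.mul_apply]

lemma geomRep_one_apply (x : B →₀ ℝ) : geomRep cs 1 x = x := by
  rw [map_one, LinearEquiv.coe_one, id_eq]

lemma geomRep_apply_inv_apply (w : W) (x : B →₀ ℝ) :
    geomRep cs w (geomRep cs w⁻¹ x) = x := by
  rw [← geomRep_mul_apply, mul_inv_cancel, geomRep_one_apply]

lemma rootForm_simpleReflection (i : B) (x y : B →₀ ℝ) :
    rootForm M (simpleReflection M i x) (simpleReflection M i y) = rootForm M x y := by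
  simp only [simpleReflection_apply, map_sub, map_smul, LinearMap.sub_apply, LinearMap.smul_apply,
    rootForm_simpleRoot_simpleRoot, gram_self, smul_eq_mul]
  rw [rootForm_comm x (simpleRoot i)]
  ring

lemma rootForm_geomRep (w : W) (x y : B →₀ ℝ) :
    rootForm M (geomRep cs w x) (geomRep cs w y) = rootForm M x y := by
  induction w using cs.simple_induction_left with
  | one => simp
  | mul_simple_left w i ih =>
    rw [geomRep_mul_apply, geomRep_mul_apply, geomRep_simple, rootForm_simpleReflection, ih]

end GeometricRepresentation

/-! ### Positivity of roots -/

section Positivity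

open Polynomial Chebyshev

variable (M) in
/-- The coefficients `sin ((n + 1)π / m) / sin (π / m)` of the roots of rank two; the Chebyshev
polynomials also cover `m = ∞`, where the coefficients are `n + 1`. -/
noncomputable def dihedralCoeff (i j : B) (n : ℤ) : ℝ := (S ℝ n).eval (-(2 * gram M i j))

lemma dihedralCoeff_add_one (i j : B) (n : ℤ) :
    dihedralCoeff M i j (n + 1) =
      -(2 * gram M i j) * dihedralCoeff M i j n - dihedralCoeff M i j (n - 1) := by
  simp only [dihedralCoeff, S_add_one, eval_sub, eval_mul, eval_X]

lemma dihedralCoeff_nonneg {i j : B} (hij : i ≠ j) {n : ℤ} (hn : -1 ≤ n)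
    (hnM : M i j = 0 ∨ n + 1 ≤ M i j) : 0 ≤ dihedralCoeff M i j n := by
  have hn' : (0 : ℝ) ≤ n + 1 := by exact_mod_cast (by omega : 0 ≤ n + 1)
  obtain h0 | h0 := eq_or_ne (M i j) 0
  · have : -(2 * gram M i j) = 2 := by simp [gram, h0]
    rwa [dihedralCoeff, this, S_eval_two]
  have h2 : (2 : ℝ) ≤ M i j := by exact_mod_cast two_le_of_ne hij h0
  have hle : (n + 1 : ℝ) ≤ M i j := by exact_mod_cast hnM.resolve_left h0
  have hpos : 0 < Real.sin (Real.pi / M i j) :=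
    Real.sin_pos_of_pos_of_lt_pi (by positivity) (div_lt_self Real.pi_pos (by linarith))
  refine nonneg_of_mul_nonneg_left ?_ hpos
  rw [dihedralCoeff, show -(2 * gram M i j) = 2 * Real.cos (Real.pi / M i j) by simp [gram],
    S_two_mul_real_cos]
  apply Real.sin_nonneg_of_nonneg_of_le_pi (by positivity)
  rw [mul_div_assoc', div_le_iff₀ (by linarith), mul_comm]
  exact mul_le_mul_of_nonneg_left hle Real.pi_pos.le

variable (cs : CoxeterSystem M W)

lemma geomRep_alternatingWord_simpleRoot (i j : B) (k : ℕ) :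
    geomRep cs (cs.wordProd (alternatingWord i j k)) (simpleRoot i) =
      if Even k then dihedralCoeff M i j k • simpleRoot i +
          dihedralCoeff M i j (k - 1) • simpleRoot j
      else dihedralCoeff M i j (k - 1) • simpleRoot i + dihedralCoeff M i j k • simpleRoot j := by
  induction k with
  | zero => simp [alternatingWord, dihedralCoeff]
  | succ k ih =>
    rw [alternatingWord_succ', cs.wordProd_cons, geomRep_mul_apply, ih, geomRep_simple]
    push_cast
    rw [dihedralCoeff_add_one, add_sub_cancel_right]
    by_cases hk : Even k
    · simp only [hk, Nat.even_add_one, not_true_eq_false, if_true, if_false, map_add, map_smul,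
        simpleReflection_simpleRoot, gram_self, gram_comm j i]
      module
    · simp only [hk, Nat.even_add_one, not_false_eq_true, if_true, if_false, map_add, map_smul,
        simpleReflection_simpleRoot, gram_self]
      module

lemma exists_geomRep_alternatingWord_eq {i j : B} (hij : i ≠ j) {k : ℕ}
    (hk : M i j = 0 ∨ k < M i j) : ∃ a b : ℝ, 0 ≤ a ∧ 0 ≤ b ∧
      geomRep cs (cs.wordProd (alternatingWord i j k)) (simpleRoot i) =
        a • simpleRoot i + b • simpleRoot j := by
  have h1 := dihedralCoeff_nonneg (M := M) hij (n := k) (by omega) (by omega)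
  have h2 := dihedralCoeff_nonneg (M := M) hij (n := k - 1) (by omega) (by omega)
  rw [geomRep_alternatingWord_simpleRoot]
  split_ifs
  · exact ⟨_, _, h1, h2, rfl⟩
  · exact ⟨_, _, h2, h1, rfl⟩

lemma exists_dihedral_factorization (i : B) {j : B} {w : W} (hj : cs.IsRightDescent w j) :
    ∃ (z : W) (k : ℕ), w = z * cs.wordProd (alternatingWord i j (k + 1)) ∧
      cs.length w = cs.length z + (k + 1) ∧
      ¬ cs.IsRightDescent z i ∧ ¬ cs.IsRightDescent z j := by
  induction hn : cs.length w generalizing w i j with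
  | zero => exact absurd hj (by simp [IsRightDescent, hn])
  | succ n ih =>
    have hlen : cs.length (w * cs.simple j) = n := by
      have := cs.isRightDescent_iff.mp hj
      omega
    have hj' := cs.isRightDescent_iff_not_isRightDescent_mul.mp hj
    by_cases hi : cs.IsRightDescent (w * cs.simple j) i
    · obtain ⟨z, k, hw, hl, hzj, hzi⟩ := ih j hi hlen
      refine ⟨z, k + 1, ?_, by omega, hzi, hzj⟩
      rw [alternatingWord_succ, cs.wordProd_concat, ← mul_assoc, ← hw,
        simple_mul_simple_cancel_right]
    · exact ⟨w * cs.simple j, 0, by simp [alternatingWord], by omega, hi, hj'⟩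

lemma le_of_length_mul_alternatingWord {i j : B} {z : W} {k : ℕ} (hM : M i j ≠ 0)
    (h : cs.length (z * cs.wordProd (alternatingWord i j k)) = cs.length z + k) :
    k ≤ M i j := by
  by_contra! hk
  have h1 := cs.length_mul_le z (cs.wordProd (alternatingWord i j k))
  have h2 := cs.not_isReduced_alternatingWord i j hM hk
  have h3 := cs.length_wordProd_le (alternatingWord i j k)
  rw [CoxeterSystem.IsReduced] at h2
  rw [length_alternatingWord] at h2 h3
  omega

lemma geomRep_mul_alternatingWord_nonneg {i j : B} (hij : i ≠ j) {z : W} {k : ℕ}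
    (hk : M i j = 0 ∨ k < M i j) (hi : 0 ≤ geomRep cs z (simpleRoot i))
    (hj : 0 ≤ geomRep cs z (simpleRoot j)) :
    0 ≤ geomRep cs (z * cs.wordProd (alternatingWord i j k)) (simpleRoot i) := by
  obtain ⟨a, b, ha, hb, hab⟩ := exists_geomRep_alternatingWord_eq cs hij hk
  rw [geomRep_mul_apply, hab, map_add, map_smul, map_smul]
  exact add_nonneg (smul_nonneg ha hi) (smul_nonneg hb hj)

theorem geomRep_simpleRoot_nonneg {w : W} {i : B} (hi : ¬ cs.IsRightDescent w i) :
    0 ≤ geomRep cs w (simpleRoot i) := by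
  induction hn : cs.length w using Nat.strong_induction_on generalizing w i with
  | _ n ih =>
    obtain rfl | hw := eq_or_ne w 1
    · simpa using simpleRoot_nonneg i
    obtain ⟨j, hj⟩ := cs.exists_rightDescent_of_ne_one hw
    obtain ⟨z, k, rfl, hl, hzi, hzj⟩ := exists_dihedral_factorization cs i hj
    have hkM : M i j = 0 ∨ k + 1 < M i j := by
      refine or_iff_not_imp_left.mpr fun hM => ?_
      have h1 := cs.not_isRightDescent_iff.mp hi
      rw [mul_assoc, ← cs.wordProd_concat, ← alternatingWord_succ, hl, add_assoc] at h1
      have := le_of_length_mul_alternatingWord cs (by rwa [M.symmetric j i]) h1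
      rw [M.symmetric j i] at this
      omega
    exact geomRep_mul_alternatingWord_nonneg cs (by rintro rfl; exact hi hj) hkM
      (ih _ (by omega) hzi rfl) (ih _ (by omega) hzj rfl)

theorem geomRep_simpleRoot_nonpos {w : W} {i : B} (hi : cs.IsRightDescent w i) :
    geomRep cs w (simpleRoot i) ≤ 0 := by
  have := geomRep_simpleRoot_nonneg cs (cs.isRightDescent_iff_not_isRightDescent_mul.mp hi)
  rwa [geomRep_mul_apply, geomRep_simple, simpleReflection_self, map_neg, neg_nonneg] at this

end Positivity

section Roots

variable (cs : CoxeterSystem M W)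

/-- The roots are the images of the simple roots under `W`. -/
def IsRoot (β : B →₀ ℝ) : Prop := ∃ w i, geomRep cs w (simpleRoot i) = β

variable {cs} {β β' : B →₀ ℝ}

lemma isRoot_simpleRoot (i : B) : IsRoot cs (simpleRoot i) := ⟨1, i, by simp⟩

namespace IsRoot

lemma rootForm_self (h : IsRoot cs β) : rootForm M β β = 1 := by
  obtain ⟨w, i, rfl⟩ := h
  rw [rootForm_geomRep, rootForm_simpleRoot_simpleRoot, gram_self]

lemma ne_zero (h : IsRoot cs β) : β ≠ 0 := by
  rintro rfl
  simpa using h.rootForm_self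

lemma geomRep_apply (h : IsRoot cs β) (w : W) : IsRoot cs (geomRep cs w β) := by
  obtain ⟨v, i, rfl⟩ := h
  exact ⟨w * v, i, geomRep_mul_apply cs w v _⟩

lemma simpleReflection_apply (h : IsRoot cs β) (i : B) : IsRoot cs (simpleReflection M i β) := by
  rw [← geomRep_simple cs]
  exact h.geomRep_apply _

lemma neg (h : IsRoot cs β) : IsRoot cs (-β) := by
  obtain ⟨v, i, rfl⟩ := h
  exact ⟨v * cs.simple i, i, by
    rw [geomRep_mul_apply, geomRep_simple, simpleReflection_self, map_neg]⟩

lemma nonneg_or_nonpos (h : IsRoot cs β) : 0 ≤ β ∨ β ≤ 0 := by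
  obtain ⟨w, i, rfl⟩ := h
  by_cases hi : cs.IsRightDescent w i
  · exact Or.inr (geomRep_simpleRoot_nonpos cs hi)
  · exact Or.inl (geomRep_simpleRoot_nonneg cs hi)

lemma not_nonneg_iff (h : IsRoot cs β) : ¬ 0 ≤ β ↔ β ≤ 0 :=
  ⟨h.nonneg_or_nonpos.resolve_left, fun hn hp => h.ne_zero (hn.antisymm hp)⟩

lemma not_nonpos_iff (h : IsRoot cs β) : ¬ β ≤ 0 ↔ 0 ≤ β :=
  ⟨h.nonneg_or_nonpos.resolve_right, fun hp hn => h.ne_zero (hn.antisymm hp)⟩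

lemma eq_of_eq_smul (h : IsRoot cs β) (h' : IsRoot cs β') (hβ : 0 ≤ β) (hβ' : 0 ≤ β') {c : ℝ}
    (hc : β = c • β') : β = β' := by
  have hc2 : c * c = 1 := by
    simpa [hc, h'.rootForm_self] using h.rootForm_self
  obtain rfl | rfl := mul_self_eq_one_iff.mp hc2
  · rwa [one_smul] at hc
  · refine absurd (le_of_eq_of_le hc ?_) (h.not_nonpos_iff.mpr hβ)
    simpa using hβ'

end IsRoot

lemma geomRep_simpleRoot_nonneg_iff {w : W} {i : B} :
    0 ≤ geomRep cs w (simpleRoot i) ↔ ¬ cs.IsRightDescent w i := by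
  refine ⟨fun h hi => ?_, geomRep_simpleRoot_nonneg cs⟩
  exact ((isRoot_simpleRoot i).geomRep_apply w).not_nonneg_iff.mpr
    (geomRep_simpleRoot_nonpos cs hi) h

lemma geomRep_inv_simpleRoot_nonneg_iff {w : W} {i : B} :
    0 ≤ geomRep cs w⁻¹ (simpleRoot i) ↔ ¬ cs.IsLeftDescent w i := by
  rw [geomRep_simpleRoot_nonneg_iff, isRightDescent_inv_iff]

variable (cs) in
lemma geomRep_injective : Function.Injective (geomRep cs) := by
  refine (injective_iff_map_eq_one _).mpr fun w hw => ?_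
  by_contra hne
  obtain ⟨i, hi⟩ := cs.exists_rightDescent_of_ne_one hne
  refine (isRoot_simpleRoot (cs := cs) i).not_nonpos_iff.mpr (simpleRoot_nonneg i) ?_
  simpa [hw] using geomRep_simpleRoot_nonpos cs hi

lemma eq_smul_simpleRoot {x : B →₀ ℝ} {i : B} (h : ∀ j, j ≠ i → x j = 0) :
    x = x i • simpleRoot i := by
  ext j
  obtain rfl | hj := eq_or_ne j i
  · simp
  · simp [h j hj, simpleRoot_of_ne hj]

lemma IsRoot.exists_pos (h : IsRoot cs β) (hβ : 0 ≤ β) {i : B} (hne : β ≠ simpleRoot i) :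
    ∃ j, j ≠ i ∧ 0 < β j := by
  contrapose! hne
  exact h.eq_of_eq_smul (isRoot_simpleRoot i) hβ (simpleRoot_nonneg i)
    (eq_smul_simpleRoot fun j hj => (hne j hj).antisymm (hβ j))

lemma IsRoot.simpleReflection_nonneg (h : IsRoot cs β) (hβ : 0 ≤ β) {i : B}
    (hne : β ≠ simpleRoot i) : 0 ≤ simpleReflection M i β := by
  obtain ⟨j, hj, hpos⟩ := h.exists_pos hβ hne
  refine (h.simpleReflection_apply i).not_nonpos_iff.mp fun hle => (hle j).not_gt ?_
  rwa [simpleReflection_coord hj]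

variable (cs) in
/-- `β` is the positive root of the reflection `t`. -/
structure IsPosRootOf (t : W) (β : B →₀ ℝ) : Prop where
  isRoot : IsRoot cs β
  nonneg : 0 ≤ β
  geomRep_apply (x : B →₀ ℝ) : geomRep cs t x = x - (2 * rootForm M β x) • β

lemma isPosRootOf_simple (i : B) : IsPosRootOf cs (cs.simple i) (simpleRoot i) :=
  ⟨isRoot_simpleRoot i, simpleRoot_nonneg i, fun x => by
    rw [geomRep_simple, simpleReflection_apply]⟩

lemma geomRep_conj_apply {t : W} (h : ∀ x, geomRep cs t x = x - (2 * rootForm M β x) • β) (w : W)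
    (x : B →₀ ℝ) : geomRep cs (w * t * w⁻¹) x =
      x - (2 * rootForm M (geomRep cs w β) x) • geomRep cs w β := by
  rw [geomRep_mul_apply, geomRep_mul_apply, h, map_sub, map_smul, ← rootForm_geomRep cs w,
    geomRep_apply_inv_apply]

lemma exists_isPosRootOf {t : W} (ht : cs.IsReflection t) : ∃ β, IsPosRootOf cs t β := by
  obtain ⟨w, i, rfl⟩ := ht
  have happly := geomRep_conj_apply (isPosRootOf_simple (cs := cs) i).geomRep_apply w
  have hroot := (isRoot_simpleRoot (cs := cs) i).geomRep_apply w
  obtain h | h := hroot.nonneg_or_nonpos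
  · exact ⟨_, hroot, h, happly⟩
  · exact ⟨_, hroot.neg, neg_nonneg.mpr h, fun x => by
      rw [happly]; simp⟩

namespace IsPosRootOf

variable {t t' : W}

lemma conj (h : IsPosRootOf cs t β) {w : W} (hw : 0 ≤ geomRep cs w β) :
    IsPosRootOf cs (w * t * w⁻¹) (geomRep cs w β) :=
  ⟨h.isRoot.geomRep_apply w, hw, geomRep_conj_apply h.geomRep_apply w⟩

lemma geomRep_self (h : IsPosRootOf cs t β) : geomRep cs t β = -β := by
  rw [h.geomRep_apply, h.isRoot.rootForm_self]
  module

lemma unique (h : IsPosRootOf cs t β) (h' : IsPosRootOf cs t β') : β = β' := by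
  refine h.isRoot.eq_of_eq_smul (c := rootForm M β' β) h'.isRoot h.nonneg h'.nonneg ?_
  have h2 : (2 : ℝ) • β = (2 : ℝ) • rootForm M β' β • β' := by
    rw [smul_smul, ← sub_eq_zero, two_smul]
    simpa [h.geomRep_self, sub_eq_add_neg, add_assoc, eq_comm, neg_eq_iff_add_eq_zero] using
      h'.geomRep_apply β
  exact smul_right_injective _ two_ne_zero h2

lemma reflection_eq (h : IsPosRootOf cs t β) (h' : IsPosRootOf cs t' β) : t = t' :=
  geomRep_injective cs <| LinearEquiv.ext fun x => by rw [h.geomRep_apply, h'.geomRep_apply]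

lemma mul_self (h : IsPosRootOf cs t β) : t * t = 1 := by
  refine geomRep_injective cs <| LinearEquiv.ext fun x => ?_
  rw [geomRep_mul_apply, h.geomRep_apply x, map_sub, map_smul, h.geomRep_self,
    h.geomRep_apply, geomRep_one_apply]
  module

lemma inv_eq (h : IsPosRootOf cs t β) : t⁻¹ = t := inv_eq_of_mul_eq_one_left h.mul_self

lemma rootForm_pos {α : B →₀ ℝ} (h : IsPosRootOf cs t β) (hα : IsRoot cs α) (hpos : 0 ≤ α)
    (ht : geomRep cs t α ≤ 0) : 0 < rootForm M α β := by
  by_contra! hle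
  refine (hα.geomRep_apply t).not_nonneg_iff.mpr ht ?_
  rw [h.geomRep_apply, rootForm_comm, sub_nonneg]
  exact (smul_nonpos_of_nonpos_of_nonneg (by linarith) h.nonneg).trans hpos

lemma coord_eq_zero {α : B →₀ ℝ} (h : IsPosRootOf cs t β) (hpos : 0 ≤ α)
    (ht : geomRep cs t α ≤ 0) {j : B} (hj : β j = 0) : α j = 0 := by
  have htj := ht j
  simp only [h.geomRep_apply, Finsupp.sub_apply, Finsupp.smul_apply, hj, smul_zero, sub_zero]
    at htj
  exact htj.antisymm (hpos j)

end IsPosRootOf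

variable (cs) in
lemma simple_injective : Function.Injective cs.simple := fun i j hij =>
  simpleRoot_injective <|
    (isPosRootOf_simple (cs := cs) i).unique (hij ▸ isPosRootOf_simple (cs := cs) j)

variable (cs) in
lemma finite_setOf_isRoot [Finite W] : {β | IsRoot cs β}.Finite := by
  have := Finite.of_injective _ (simple_injective cs)
  exact (Set.finite_range fun p : W × B => geomRep cs p.1 (simpleRoot p.2)).subset
    fun _ ⟨w, i, h⟩ => ⟨(w, i), h⟩

end Roots

/-! ### Braid relations and Matsumoto's theorem -/

section Matsumoto

variable (M) in
/-- A family of elements of a monoid, indexed by the simple reflections, that satisfies the braid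
relations of `M`; it is the analogue for Artin groups of `CoxeterMatrix.IsLiftable`. -/
def IsBraidLiftable {N : Type*} [Monoid N] (f : B → N) : Prop :=
  ∀ i j, i ≠ j → M i j ≠ 0 →
    ((alternatingWord i j (M i j)).map f).prod = ((alternatingWord j i (M i j)).map f).prod

variable {cs : CoxeterSystem M W}

lemma isReduced_of_append {l l' : List B} (h : cs.IsReduced (l ++ l')) : cs.IsReduced l := by
  simpa using h.take l.length

lemma exists_eq_mul_alternatingWord {i j : B} (hij : i ≠ j) {w : W}
    (hi : cs.IsRightDescent w i) (hj : cs.IsRightDescent w j) :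
    M i j ≠ 0 ∧ ∃ z, cs.length w = cs.length z + M i j ∧
      w = z * cs.wordProd (alternatingWord i j (M i j)) := by
  obtain ⟨z, k, hw, hl, hzi, hzj⟩ := exists_dihedral_factorization cs i hj
  have hk : ¬ (M i j = 0 ∨ k + 1 < M i j) := by
    intro hk
    refine geomRep_simpleRoot_nonneg_iff.mp ?_ hi
    rw [hw]
    exact geomRep_mul_alternatingWord_nonneg cs hij hk (geomRep_simpleRoot_nonneg cs hzi)
      (geomRep_simpleRoot_nonneg cs hzj)
  push Not at hk
  have hle := le_of_length_mul_alternatingWord cs hk.1 (hw ▸ hl)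
  have hM : k + 1 = M i j := hle.antisymm hk.2
  exact ⟨hk.1, z, hM ▸ hl, hM ▸ hw⟩

variable {N : Type*} [Monoid N] {f : B → N}

lemma prod_map_concat_eq {l lz : List B} {x y : B} {m : ℕ}
    (hf : ∀ l', cs.IsReduced l' → cs.wordProd l = cs.wordProd l' →
      (l.map f).prod = (l'.map f).prod)
    (hl : cs.IsReduced l) (hlen : l.length = lz.length + m)
    (h : cs.wordProd (l ++ [x]) =
      cs.wordProd lz * cs.wordProd (alternatingWord y x (m + 1))) :
    ((l ++ [x]).map f).prod = (lz.map f).prod * ((alternatingWord y x (m + 1)).map f).prod := by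
  have hprod : cs.wordProd l = cs.wordProd (lz ++ alternatingWord x y m) := by
    rw [alternatingWord_succ, cs.wordProd_append, cs.wordProd_concat, cs.wordProd_singleton,
      ← mul_assoc] at h
    rw [cs.wordProd_append, mul_right_cancel h]
  have hred : cs.IsReduced (lz ++ alternatingWord x y m) := by
    rw [CoxeterSystem.IsReduced, ← hprod, hl.eq, hlen, List.length_append, length_alternatingWord]
  simp [hf _ hred hprod, alternatingWord_succ, mul_assoc]

theorem prod_map_eq_of_isReduced (hf : IsBraidLiftable M f) {l l' : List B} (h : cs.IsReduced l)
    (h' : cs.IsReduced l') (hll' : cs.wordProd l = cs.wordProd l') :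
    (l.map f).prod = (l'.map f).prod := by
  induction hn : l.length using Nat.strong_induction_on generalizing l l' with
  | _ n ih =>
    have hlen : l.length = l'.length := by rw [← h.eq, ← h'.eq, hll']
    obtain rfl | ⟨l₁, i, rfl⟩ := l.eq_nil_or_concat'
    · rw [List.eq_nil_of_length_eq_zero hlen.symm]
    obtain rfl | ⟨l₂, j, rfl⟩ := l'.eq_nil_or_concat'
    · rw [List.eq_nil_of_length_eq_zero hlen]
    have hlen' : l₁.length = l₂.length := by simpa using hlen
    have h₁ := isReduced_of_append h
    have h₂ := isReduced_of_append h'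
    have ih₁ l' (hl' : cs.IsReduced l') h := ih l₁.length (by simp [← hn]) h₁ hl' h rfl
    have ih₂ l' (hl' : cs.IsReduced l') h := ih l₂.length (by simp [← hn, hlen']) h₂ hl' h rfl
    have hi : cs.wordProd (l₁ ++ [i]) * cs.simple i = cs.wordProd l₁ := by simp [wordProd_append]
    have hj : cs.wordProd (l₂ ++ [j]) * cs.simple j = cs.wordProd l₂ := by simp [wordProd_append]
    obtain rfl | hij := eq_or_ne i j
    · simp [ih₁ l₂ h₂ (by rw [← hi, ← hj, hll'])]
    have hdi : cs.IsRightDescent (cs.wordProd (l₁ ++ [i])) i := by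
      rw [IsRightDescent, hi, h.eq, h₁.eq]; simp
    have hdj : cs.IsRightDescent (cs.wordProd (l₁ ++ [i])) j := by
      rw [hll', IsRightDescent, hj, h'.eq, h₂.eq]; simp
    obtain ⟨hM, z, hz, hw⟩ := exists_eq_mul_alternatingWord hij hdi hdj
    have hw' := hw.trans (congrArg (z * ·) (cs.wordProd_braidWord_eq i j))
    obtain ⟨lz, hlz, rfl⟩ := cs.exists_isReduced z
    obtain ⟨m, hm⟩ := Nat.exists_eq_succ_of_ne_zero hM
    rw [h.eq, hlz.eq, hm] at hz
    have hbraid := hf i j hij hM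
    rw [braidWord, M.symmetric j i] at hw'
    rw [hm] at hw hw' hbraid
    rw [List.length_append, List.length_singleton] at hz
    rw [prod_map_concat_eq ih₁ h₁ (by omega) hw',
      prod_map_concat_eq ih₂ h₂ (by omega) (hll' ▸ hw), hbraid]

end Matsumoto

section PositiveLift

variable (M) in
/-- The standard generator of the Artin group. -/
def artinGen (i : B) : ArtinGroup M := PresentedGroup.of i

lemma isBraidLiftable_artinGen : IsBraidLiftable M (artinGen M) := by
  intro i j hij hM
  have hmk (l : List B) : (l.map (artinGen M)).prod =
      PresentedGroup.mk (artinRels M) (l.map FreeGroup.of).prod := by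
    rw [map_list_prod, List.map_map]
    rfl
  rw [hmk, hmk, ← mul_inv_eq_one, ← map_inv, ← map_mul]
  exact (QuotientGroup.eq_one_iff _).mpr (Subgroup.subset_normalClosure ⟨i, j, hij, hM, rfl⟩)

/-- The homomorphism out of the Artin group that is determined by a family of elements satisfying
the braid relations. -/
def artinLift {G : Type*} [Group G] {f : B → G} (hf : IsBraidLiftable M f) : ArtinGroup M →* G :=
  PresentedGroup.toGroup (f := f) fun _ ⟨i, j, hij, hM, hx⟩ => by
    rw [hx, map_mul, map_inv, map_list_prod, map_list_prod, List.map_map, List.map_map,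
      mul_inv_eq_one]
    simpa [Function.comp_def] using hf i j hij hM

@[simp] lemma artinLift_artinGen {G : Type*} [Group G] {f : B → G} (hf : IsBraidLiftable M f)
    (i : B) : artinLift hf (artinGen M i) = f i :=
  PresentedGroup.toGroup.of _

variable (cs : CoxeterSystem M W)

/-- The positive lift of `w` to the Artin group, through any reduced word. -/
noncomputable def posLift (w : W) : ArtinGroup M :=
  ((cs.exists_isReduced w).choose.map (artinGen M)).prod

lemma posLift_wordProd {l : List B} (h : cs.IsReduced l) :
    posLift cs (cs.wordProd l) = (l.map (artinGen M)).prod := by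
  have ⟨hred, heq⟩ := (cs.exists_isReduced (cs.wordProd l)).choose_spec
  exact prod_map_eq_of_isReduced isBraidLiftable_artinGen hred h heq.symm

lemma posLift_simple_mul {w : W} {i : B} (h : ¬ cs.IsLeftDescent w i) :
    posLift cs (cs.simple i * w) = artinGen M i * posLift cs w := by
  obtain ⟨l, hl, rfl⟩ := cs.exists_isReduced w
  have hil : cs.IsReduced (i :: l) := by
    rw [CoxeterSystem.IsReduced, wordProd_cons, cs.not_isLeftDescent_iff.mp h, hl.eq,
      List.length_cons]
  rw [← wordProd_cons, posLift_wordProd cs hil, posLift_wordProd cs hl, List.map_cons,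
    List.prod_cons]

lemma posLift_simple_mul_of_isLeftDescent {w : W} {i : B} (h : cs.IsLeftDescent w i) :
    posLift cs (cs.simple i * w) = (artinGen M i)⁻¹ * posLift cs w := by
  rw [eq_inv_mul_iff_mul_eq,
    ← posLift_simple_mul cs (cs.isLeftDescent_iff_not_isLeftDescent_mul.mp h),
    simple_mul_simple_cancel_left]

lemma posLift_simple_mul_mul_inv_congr {i : B} {u u' : W}
    (h : cs.IsLeftDescent u i ↔ cs.IsLeftDescent u' i) :
    posLift cs (cs.simple i * u) * (posLift cs u)⁻¹ =
      posLift cs (cs.simple i * u') * (posLift cs u')⁻¹ := by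
  by_cases hu : cs.IsLeftDescent u i
  · rw [posLift_simple_mul_of_isLeftDescent cs hu,
      posLift_simple_mul_of_isLeftDescent cs (h.mp hu), mul_inv_cancel_right, mul_inv_cancel_right]
  · rw [posLift_simple_mul cs hu, posLift_simple_mul cs (h.not.mp hu), mul_inv_cancel_right,
      mul_inv_cancel_right]

/-- The path from the chamber of `u` to that of `vu` lifts to an element of the Artin group that
depends only on the position of the first chamber with respect to the walls crossed by `v`. -/
lemma posLift_mul_mul_inv_congr {v u u' : W}
    (h : ∀ α, IsRoot cs α → 0 ≤ α → geomRep cs v α ≤ 0 →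
      (0 ≤ geomRep cs u⁻¹ α ↔ 0 ≤ geomRep cs u'⁻¹ α)) :
    posLift cs (v * u) * (posLift cs u)⁻¹ = posLift cs (v * u') * (posLift cs u')⁻¹ := by
  induction hn : cs.length v using Nat.strong_induction_on generalizing v u u' with
  | _ n ih =>
    obtain rfl | hv := eq_or_ne v 1
    · simp
    obtain ⟨i, hi⟩ := cs.exists_rightDescent_of_ne_one hv
    obtain ⟨v, rfl⟩ : ∃ v', v = v' * cs.simple i := ⟨v * cs.simple i, by simp⟩
    have hvi : ¬ cs.IsRightDescent v i := by
      simpa using cs.isRightDescent_iff_not_isRightDescent_mul.mp hi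
    have hstep := posLift_simple_mul_mul_inv_congr cs (i := i) (u := u) (u' := u') <| by
      simpa only [geomRep_inv_simpleRoot_nonneg_iff, not_iff_not] using
        h _ (isRoot_simpleRoot i) (simpleRoot_nonneg i) (geomRep_simpleRoot_nonpos cs hi)
    have hrest := ih (cs.length v) (by simpa [IsRightDescent, hn] using hi) (v := v)
      (u := cs.simple i * u) (u' := cs.simple i * u') (fun α hα hpos hvα => by
        have hne : α ≠ simpleRoot i := by
          rintro rfl
          exact (hα.geomRep_apply v).not_nonpos_iff.mpr (geomRep_simpleRoot_nonneg cs hvi) hvα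
        simpa only [mul_inv_rev, inv_simple, geomRep_mul_apply, geomRep_simple] using
          h _ (hα.simpleReflection_apply i) (hα.simpleReflection_nonneg hpos hne)
            (by simpa [geomRep_mul_apply] using hvα)) rfl
    have hcocycle (u : W) : posLift cs (v * cs.simple i * u) * (posLift cs u)⁻¹ =
        posLift cs (v * (cs.simple i * u)) * (posLift cs (cs.simple i * u))⁻¹ *
          (posLift cs (cs.simple i * u) * (posLift cs u)⁻¹) := by
      rw [mul_assoc v]
      group
    rw [hcocycle, hcocycle, hstep, hrest]

end PositiveLift

/-! ### The alternating form of an ordering of the simple roots -/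

section OrderForm

/-- The subspace spanned by the simple roots of the letters of `l`. -/
def simpleSpan (l : List B) : Submodule ℝ (B →₀ ℝ) := Finsupp.supported ℝ ℝ {i | i ∈ l}

lemma mem_simpleSpan {l : List B} {x : B →₀ ℝ} : x ∈ simpleSpan l ↔ ∀ j ∉ l, x j = 0 :=
  Finsupp.mem_supported' ℝ x

lemma simpleRoot_mem_simpleSpan {s : B} {l : List B} (hs : s ∈ l) :
    simpleRoot s ∈ simpleSpan l :=
  Finsupp.single_mem_supported ℝ _ hs

variable (M) in
/-- The contribution of the letters of `l` to the functional `⟨α_s, ·⟩`. -/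
noncomputable def partialPairing (l : List B) (s : B) : Module.Dual ℝ (B →₀ ℝ) :=
  (l.map fun j => gram M s j • Finsupp.lapply j).sum

variable (M) in
/-- The alternating form `ω_l` with `ω_l(α_j, α_i) = ⟨α_i, α_j⟩` whenever `i` precedes `j` in `l`;
it is the antisymmetrization of the Euler form of the corresponding orientation of the Coxeter
graph. -/
noncomputable def orderForm : List B → LinearMap.BilinForm ℝ (B →₀ ℝ)
  | [] => 0
  | s :: l => orderForm l + LinearMap.BilinForm.linMulLin (partialPairing M l s) (Finsupp.lapply s)
      - LinearMap.BilinForm.linMulLin (Finsupp.lapply s) (partialPairing M l s)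

@[simp] lemma partialPairing_nil (s : B) : partialPairing M [] s = 0 := rfl

lemma partialPairing_cons (l : List B) (t s : B) (x : B →₀ ℝ) :
    partialPairing M (t :: l) s x = gram M s t * x t + partialPairing M l s x := by
  simp [partialPairing]

lemma partialPairing_apply (l : List B) (s : B) (x : B →₀ ℝ) :
    partialPairing M l s x = (l.map fun j => gram M s j * x j).sum := by
  induction l with
  | nil => simp
  | cons t l ih => rw [partialPairing_cons, ih, List.map_cons, List.sum_cons]

lemma partialPairing_concat (l : List B) (t s : B) (x : B →₀ ℝ) :
    partialPairing M (l ++ [t]) s x = partialPairing M l s x + gram M s t * x t := by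
  simp [partialPairing]

lemma partialPairing_congr {l : List B} {s : B} {x x' : B →₀ ℝ} (h : ∀ j ∈ l, x j = x' j) :
    partialPairing M l s x = partialPairing M l s x' := by
  induction l with
  | nil => rfl
  | cons t l ih =>
    rw [List.forall_mem_cons] at h
    rw [partialPairing_cons, partialPairing_cons, h.1, ih h.2]

@[simp] lemma orderForm_nil : orderForm M [] = 0 := rfl

lemma orderForm_cons (s : B) (l : List B) (x y : B →₀ ℝ) :
    orderForm M (s :: l) x y =
      orderForm M l x y + partialPairing M l s x * y s - x s * partialPairing M l s y := rfl

lemma orderForm_concat (l : List B) (s : B) (x y : B →₀ ℝ) :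
    orderForm M (l ++ [s]) x y =
      orderForm M l x y - (partialPairing M l s x * y s - x s * partialPairing M l s y) := by
  induction l with
  | nil => simp [orderForm_cons]
  | cons t l ih =>
    rw [List.cons_append, orderForm_cons, orderForm_cons, ih, partialPairing_concat,
      partialPairing_concat, partialPairing_cons, partialPairing_cons, gram_comm t s]
    ring

@[simp] lemma orderForm_self (l : List B) (x : B →₀ ℝ) : orderForm M l x x = 0 := by
  induction l with
  | nil => simp
  | cons t l ih =>
    rw [orderForm_cons, ih]
    ring

lemma orderForm_congr {l : List B} {x x' y y' : B →₀ ℝ} (hx : ∀ j ∈ l, x j = x' j)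
    (hy : ∀ j ∈ l, y j = y' j) : orderForm M l x y = orderForm M l x' y' := by
  induction l with
  | nil => rfl
  | cons t l ih =>
    rw [List.forall_mem_cons] at hx hy
    rw [orderForm_cons, orderForm_cons, ih hx.2 hy.2, partialPairing_congr hx.2,
      partialPairing_congr hy.2, hx.1, hy.1]

lemma orderForm_simpleRoot {s : B} {l : List B} (hs : s ∉ l) (y : B →₀ ℝ) :
    orderForm M (s :: l) (simpleRoot s) y = -partialPairing M l s y := by
  have h0 : ∀ j ∈ l, simpleRoot s j = (0 : B →₀ ℝ) j := fun j hj =>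
    simpleRoot_of_ne (ne_of_mem_of_not_mem hj hs)
  rw [orderForm_cons, orderForm_congr h0 fun _ _ => rfl, partialPairing_congr h0]
  simp

lemma rootForm_simpleRoot_of_mem {s : B} {l : List B} (hl : (s :: l).Nodup) {x : B →₀ ℝ}
    (hx : x ∈ simpleSpan (s :: l)) :
    rootForm M (simpleRoot s) x = x s + partialPairing M l s x := by
  classical
  have hsupp : x.support ⊆ (s :: l).toFinset := fun j hj => List.mem_toFinset.mpr (hx hj)
  rw [rootForm_simpleRoot, Finsupp.linearCombination_apply,
    Finsupp.sum_of_support_subset x hsupp _ (by simp), List.sum_toFinset _ hl]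
  simp [partialPairing_apply, mul_comm]

lemma simpleReflection_mem_simpleSpan {l : List B} {s : B} (hs : s ∈ l) {x : B →₀ ℝ}
    (hx : x ∈ simpleSpan l) : simpleReflection M s x ∈ simpleSpan l := by
  rw [simpleReflection_apply]
  exact sub_mem hx (Submodule.smul_mem _ _ (simpleRoot_mem_simpleSpan hs))

lemma simpleReflection_coord_self {s : B} {l : List B} (hl : (s :: l).Nodup) {x : B →₀ ℝ}
    (hx : x ∈ simpleSpan (s :: l)) :
    simpleReflection M s x s = -x s - 2 * partialPairing M l s x := by
  rw [simpleReflection_apply, rootForm_simpleRoot_of_mem hl hx]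
  simp
  ring

lemma orderForm_rotate {s : B} {l : List B} (hl : (s :: l).Nodup) {x y : B →₀ ℝ}
    (hx : x ∈ simpleSpan (s :: l)) (hy : y ∈ simpleSpan (s :: l)) :
    orderForm M (l ++ [s]) (simpleReflection M s x) (simpleReflection M s y) =
      orderForm M (s :: l) x y := by
  have hcoord (z : B →₀ ℝ) : ∀ j ∈ l, simpleReflection M s z j = z j := fun j hj =>
    simpleReflection_coord (ne_of_mem_of_not_mem hj hl.notMem)
  rw [orderForm_concat, orderForm_congr (hcoord x) (hcoord y), partialPairing_congr (hcoord x),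
    partialPairing_congr (hcoord y), simpleReflection_coord_self hl hx,
    simpleReflection_coord_self hl hy, orderForm_cons]
  ring

end OrderForm

/-! ### Chambers and the lifts of reflections -/

section Chambers

instance posSMulStrictMono_lex {E F : Type*} [AddCommGroup E] [PartialOrder E] [Module ℝ E]
    [PosSMulStrictMono ℝ E] [AddCommGroup F] [Preorder F] [Module ℝ F] [PosSMulStrictMono ℝ F] :
    PosSMulStrictMono ℝ (E ×ₗ F) where
  smul_lt_smul_of_pos_left c hc x y h := by
    rw [Prod.Lex.lt_iff] at h ⊢
    exact h.imp (smul_lt_smul_of_pos_left · hc) fun ⟨h1, h2⟩ =>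
      ⟨congrArg (c • ·) h1, smul_lt_smul_of_pos_left h2 hc⟩

variable {cs : CoxeterSystem M W} {E : Type*} [AddCommGroup E] [LinearOrder E]
  [IsOrderedAddMonoid E] [Module ℝ E]

lemma map_pos_of_map_simpleRoot_pos [PosSMulStrictMono ℝ E] {f : (B →₀ ℝ) →ₗ[ℝ] E}
    (hf : ∀ i, 0 < f (simpleRoot i)) {x : B →₀ ℝ} (hx : 0 ≤ x) (hne : x ≠ 0) : 0 < f x := by
  have hsum : f x = ∑ i ∈ x.support, x i • f (simpleRoot i) := by
    conv_lhs => rw [← Finsupp.sum_single x, Finsupp.sum, map_sum]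
    simp [simpleRoot, ← map_smul]
  rw [hsum]
  refine Finset.sum_pos (fun i hi => ?_) (Finsupp.support_nonempty_iff.mpr hne)
  exact smul_pos ((hx i).lt_of_ne' (Finsupp.mem_support_iff.mp hi)) (hf i)

/-- The sum of the positive roots, usually denoted `2ρ` (by convention `0` when there are
infinitely many roots). -/
noncomputable def sumPosRoots (cs : CoxeterSystem M W) : B →₀ ℝ :=
  ∑ᶠ β ∈ {β | IsRoot cs β ∧ 0 ≤ β}, β

lemma simpleReflection_sumPosRoots [Finite W] (i : B) :
    simpleReflection M i (sumPosRoots cs) = sumPosRoots cs - (2 : ℝ) • simpleRoot i := by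
  set R : Set (B →₀ ℝ) := {β | IsRoot cs β ∧ 0 ≤ β} \ {simpleRoot i}
  have hfin : R.Finite := (finite_setOf_isRoot cs).subset fun β h => h.1.1
  have hR : insert (simpleRoot i) R = {β | IsRoot cs β ∧ 0 ≤ β} :=
    Set.insert_sdiff_self_of_mem ⟨isRoot_simpleRoot i, simpleRoot_nonneg i⟩
  have hsum : sumPosRoots cs = simpleRoot i + ∑ᶠ β ∈ R, β := by
    rw [sumPosRoots, ← hR, finsum_mem_insert _ (by simp [R]) hfin]
  have hmaps : Set.MapsTo (simpleReflection M i) R R := fun β ⟨⟨hβ, h0⟩, hne⟩ =>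
    ⟨⟨hβ.simpleReflection_apply i, hβ.simpleReflection_nonneg h0 hne⟩, fun h => by
      rw [Set.mem_singleton_iff, ← simpleReflection_simpleReflection i (simpleRoot i),
        simpleReflection_self, (simpleReflection M i).injective.eq_iff] at h
      exact (isRoot_simpleRoot (cs := cs) i).neg.not_nonneg_iff.mpr
        (neg_nonpos.mpr (simpleRoot_nonneg i)) (h ▸ h0)⟩
  have hperm : ∑ᶠ β ∈ R, simpleReflection M i β = ∑ᶠ β ∈ R, β :=
    finsum_mem_eq_of_bijOn (simpleReflection M i)
      ⟨hmaps, (simpleReflection M i).injective.injOn, fun β hβ =>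
        ⟨_, hmaps hβ, simpleReflection_simpleReflection i β⟩⟩ fun _ _ => rfl
  have hmap : simpleReflection M i (∑ᶠ β ∈ R, β) = ∑ᶠ β ∈ R, simpleReflection M i β :=
    (simpleReflection M i).toLinearMap.toAddMonoidHom.map_finsum_mem _ hfin
  rw [hsum, map_add, simpleReflection_self, hmap, hperm]
  module

lemma exists_chamber [Finite W] [PosSMulStrictMono ℝ E] (f : (B →₀ ℝ) →ₗ[ℝ] E)
    (hf : ∀ α, IsRoot cs α → f α ≠ 0) :
    ∃ u, ∀ α, IsRoot cs α → (0 ≤ geomRep cs u⁻¹ α ↔ 0 < f α) := by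
  obtain ⟨u, hu⟩ := Finite.exists_max fun u => f (geomRep cs u (sumPosRoots cs))
  have hsimple (i : B) : 0 < (f ∘ₗ (geomRep cs u).toLinearMap) (simpleRoot i) := by
    have hmax := hu (u * cs.simple i)
    rw [geomRep_mul_apply, geomRep_simple, simpleReflection_sumPosRoots, map_sub, map_sub,
      map_smul, map_smul, sub_le_self_iff] at hmax
    refine lt_of_le_of_ne ?_ (hf _ ((isRoot_simpleRoot i).geomRep_apply u)).symm
    exact (smul_nonneg_iff_nonneg_of_pos_left two_pos).mp hmax
  have hpos (α) (hα : IsRoot cs α) (h : 0 ≤ geomRep cs u⁻¹ α) : 0 < f α := by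
    simpa using map_pos_of_map_simpleRoot_pos hsimple h (hα.geomRep_apply u⁻¹).ne_zero
  refine ⟨u, fun α hα => ⟨hpos α hα, fun h => ?_⟩⟩
  rw [← (hα.geomRep_apply u⁻¹).not_nonpos_iff]
  intro hle
  have hneg := hpos (-α) hα.neg (by rwa [map_neg, neg_nonneg])
  rw [map_neg, neg_pos] at hneg
  exact h.asymm hneg

/-- The height of a vector, the sum of its coordinates in the basis of simple roots. -/
noncomputable def height : Module.Dual ℝ (B →₀ ℝ) := Finsupp.linearCombination ℝ fun _ => 1

lemma height_pos {x : B →₀ ℝ} (hx : 0 ≤ x) (hne : x ≠ 0) : 0 < height x :=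
  map_pos_of_map_simpleRoot_pos (fun i => by simp [height, simpleRoot]) hx hne

variable (M) in
/-- The functional `x ↦ -ω_l(x, β)`, with ties broken first by `⟨·, β⟩` and then by minus the
height. -/
noncomputable def lexFunctional (l : List B) (β : B →₀ ℝ) : (B →₀ ℝ) →ₗ[ℝ] ℝ ×ₗ ℝ ×ₗ ℝ :=
  (toLexLinearEquiv ℝ (ℝ × ℝ ×ₗ ℝ)).toLinearMap ∘ₗ (-(orderForm M l).flip β).prod
    ((toLexLinearEquiv ℝ (ℝ × ℝ)).toLinearMap ∘ₗ
      ((rootForm M).flip β).prod (-height))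

lemma lexFunctional_pos_iff {l : List B} {β x : B →₀ ℝ} : 0 < lexFunctional M l β x ↔
    orderForm M l x β < 0 ∨ orderForm M l x β = 0 ∧ (0 < rootForm M x β ∨
      rootForm M x β = 0 ∧ height x < 0) := by
  simp [lexFunctional, Prod.Lex.lt_iff, eq_comm]

lemma lexFunctional_ne_zero (l : List B) (β : B →₀ ℝ) {α : B →₀ ℝ} (hα : IsRoot cs α) :
    lexFunctional M l β α ≠ 0 := by
  intro h
  have hheight : height α = 0 :=
    neg_eq_zero.mp (congrArg (fun p => (ofLex (ofLex p).2).2) h)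
  obtain h0 | h0 := hα.nonneg_or_nonpos
  · exact (height_pos h0 hα.ne_zero).ne' hheight
  · exact (height_pos (neg_nonneg.mpr h0) hα.neg.ne_zero).ne' (by rw [map_neg, hheight, neg_zero])

variable (cs) in
/-- The chamber of `u` is adapted to `β` and the ordering `l`: it lies on the positive side of
the wall of a root `α` exactly when the functional `lexFunctional M l β` is positive on `α`. -/
def IsAdapted (l : List B) (β : B →₀ ℝ) (u : W) : Prop :=
  ∀ α, IsRoot cs α → (0 ≤ geomRep cs u⁻¹ α ↔ 0 < lexFunctional M l β α)

variable (cs) in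
lemma exists_isAdapted [Finite W] (l : List B) (β : B →₀ ℝ) : ∃ u, IsAdapted cs l β u :=
  exists_chamber _ fun _ => lexFunctional_ne_zero l β

variable {l : List B} {α β : B →₀ ℝ} {u : W}

lemma IsAdapted.nonneg_iff (hu : IsAdapted cs l β u) (hα : IsRoot cs α)
    (hpos : 0 < rootForm M α β) : 0 ≤ geomRep cs u⁻¹ α ↔ orderForm M l α β ≤ 0 := by
  rw [hu α hα, lexFunctional_pos_iff, le_iff_lt_or_eq]
  simp [hpos]

lemma IsAdapted.nonpos (hu : IsAdapted cs l β u) (hα : IsRoot cs α)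
    (hω : 0 ≤ orderForm M l α β) (htie : orderForm M l α β = 0 → rootForm M α β = 0 ∧ 0 ≤ α) :
    geomRep cs u⁻¹ α ≤ 0 := by
  rw [← (hα.geomRep_apply u⁻¹).not_nonneg_iff, hu α hα, lexFunctional_pos_iff]
  rintro (h | ⟨h, h'⟩)
  · exact hω.not_gt h
  · obtain ⟨hzero, h0⟩ := htie h
    obtain h' | ⟨-, h'⟩ := h'
    · exact h'.ne' hzero
    · exact (height_pos h0 hα.ne_zero).not_gt h'

end Chambers

section Lifts

variable (cs : CoxeterSystem M W)

/-- The position of the chamber of `u` relative to the walls crossed by the reflection `t` is the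
one prescribed by the form `ω_l`. -/
def IsLiftingChamber (l : List B) (t u : W) : Prop :=
  ∀ β, IsPosRootOf cs t β → ∀ α, IsRoot cs α → 0 ≤ α → geomRep cs t α ≤ 0 →
    (0 ≤ geomRep cs u⁻¹ α ↔ orderForm M l α β ≤ 0)

open Classical in
/-- The dual braid generator lifting the reflection `t`, for the ordering `l` of the simple
reflections: the quotient of the positive lifts of `t * u` and `u` for any lifting chamber `u`.
The default value `1` does not occur when `W` is finite. -/
noncomputable def reflectionLift (l : List B) (t : W) : ArtinGroup M :=
  if h : ∃ u, IsLiftingChamber cs l t u then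
    posLift cs (t * h.choose) * (posLift cs h.choose)⁻¹ else 1

variable {cs} {l : List B} {s : B} {t u : W} {β : B →₀ ℝ}

lemma IsLiftingChamber.reflectionLift_eq (h : IsLiftingChamber cs l t u)
    (hβ : IsPosRootOf cs t β) : reflectionLift cs l t = posLift cs (t * u) * (posLift cs u)⁻¹ := by
  have hex : ∃ u, IsLiftingChamber cs l t u := ⟨u, h⟩
  rw [reflectionLift, dif_pos hex]
  refine posLift_mul_mul_inv_congr cs fun α hα h0 ht => ?_
  rw [hex.choose_spec β hβ α hα h0 ht, h β hβ α hα h0 ht]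

lemma IsAdapted.isLiftingChamber (hu : IsAdapted cs l β u) (hβ : IsPosRootOf cs t β) :
    IsLiftingChamber cs l t u := by
  intro β' hβ' α hα h0 ht
  obtain rfl := hβ'.unique hβ
  exact hu.nonneg_iff hα (hβ.rootForm_pos hα h0 ht)

variable (cs) in
lemma reflectionLift_simple (l : List B) (i : B) :
    reflectionLift cs l (cs.simple i) = artinGen M i := by
  have hone : IsLiftingChamber cs l (cs.simple i) 1 := by
    intro β hβ α hα h0 ht
    obtain rfl := hβ.unique (isPosRootOf_simple i)
    obtain rfl : α = simpleRoot i := by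
      by_contra hne
      rw [geomRep_simple] at ht
      exact (hα.simpleReflection_apply i).not_nonneg_iff.mpr ht (hα.simpleReflection_nonneg h0 hne)
    simpa using h0
  rw [hone.reflectionLift_eq (isPosRootOf_simple i), posLift_simple_mul, mul_inv_cancel_right]
  simp [IsLeftDescent]

-- The letter `s` contributes neither to `ω` nor to the roots made negative by `t`.
lemma reflectionLift_cons [Finite W] (hs : s ∉ l) (hβ : IsPosRootOf cs t β)
    (hspan : β ∈ simpleSpan l) : reflectionLift cs (s :: l) t = reflectionLift cs l t := by
  obtain ⟨u, hu⟩ := exists_isAdapted cs l β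
  have hβs : β s = 0 := mem_simpleSpan.mp hspan s hs
  have hcons : IsLiftingChamber cs (s :: l) t u := by
    intro β' hβ' α hα h0 ht
    obtain rfl := hβ'.unique hβ
    rw [hu.isLiftingChamber hβ _ hβ α hα h0 ht, orderForm_cons, hβs, hβ.coord_eq_zero h0 ht hβs]
    simp
  rw [hcons.reflectionLift_eq hβ, (hu.isLiftingChamber hβ).reflectionLift_eq hβ]

lemma two_mul_orderForm_simpleRoot (hl : (s :: l).Nodup) (hspan : β ∈ simpleSpan (s :: l)) :
    2 * orderForm M (s :: l) (simpleRoot s) β = β s + simpleReflection M s β s := by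
  rw [orderForm_simpleRoot hl.notMem, simpleReflection_coord_self hl hspan]
  ring

lemma rootForm_simpleRoot_eq_sub (hl : (s :: l).Nodup) (hspan : β ∈ simpleSpan (s :: l)) :
    rootForm M (simpleRoot s) β = β s - orderForm M (s :: l) (simpleRoot s) β := by
  rw [rootForm_simpleRoot_of_mem hl hspan, orderForm_simpleRoot hl.notMem, sub_neg_eq_add]

lemma orderForm_simpleRoot_nonneg (hl : (s :: l).Nodup) (hspan : β ∈ simpleSpan (s :: l))
    (h0 : 0 ≤ β s) (hs0 : 0 ≤ simpleReflection M s β s) :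
    0 ≤ orderForm M (s :: l) (simpleRoot s) β := by
  linarith [two_mul_orderForm_simpleRoot (M := M) hl hspan]

lemma rootForm_simpleRoot_eq_zero (hl : (s :: l).Nodup) (hspan : β ∈ simpleSpan (s :: l))
    (h0 : 0 ≤ β s) (hs0 : 0 ≤ simpleReflection M s β s)
    (hω : orderForm M (s :: l) (simpleRoot s) β = 0) : rootForm M (simpleRoot s) β = 0 := by
  linarith [two_mul_orderForm_simpleRoot (M := M) hl hspan,
    rootForm_simpleRoot_eq_sub (M := M) hl hspan]

lemma IsAdapted.geomRep_inv_simpleRoot_nonpos (hl : (s :: l).Nodup)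
    (hu : IsAdapted cs (s :: l) β u) (hspan : β ∈ simpleSpan (s :: l)) (h0 : 0 ≤ β)
    (hs0 : 0 ≤ simpleReflection M s β) : geomRep cs u⁻¹ (simpleRoot s) ≤ 0 :=
  hu.nonpos (isRoot_simpleRoot s) (orderForm_simpleRoot_nonneg hl hspan (h0 s) (hs0 s)) fun h =>
    ⟨rootForm_simpleRoot_eq_zero hl hspan (h0 s) (hs0 s) h, simpleRoot_nonneg s⟩

lemma IsAdapted.geomRep_mul_inv_simpleRoot_nonpos (hl : (s :: l).Nodup)
    (hu : IsAdapted cs (s :: l) β u) (hspan : β ∈ simpleSpan (s :: l)) (hβ : IsPosRootOf cs t β)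
    (hs0 : 0 ≤ simpleReflection M s β) : geomRep cs (t * u)⁻¹ (simpleRoot s) ≤ 0 := by
  have hω : orderForm M (s :: l) (geomRep cs t (simpleRoot s)) β =
      orderForm M (s :: l) (simpleRoot s) β := by simp [hβ.geomRep_apply]
  rw [mul_inv_rev, hβ.inv_eq, geomRep_mul_apply]
  refine hu.nonpos ((isRoot_simpleRoot s).geomRep_apply t) ?_ fun h => ?_
  · rw [hω]
    exact orderForm_simpleRoot_nonneg hl hspan (hβ.nonneg s) (hs0 s)
  · have hzero := rootForm_simpleRoot_eq_zero hl hspan (hβ.nonneg s) (hs0 s) (hω ▸ h)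
    have hfix : geomRep cs t (simpleRoot s) = simpleRoot s := by
      simp [hβ.geomRep_apply, rootForm_comm β, hzero]
    exact hfix.symm ▸ ⟨hzero, simpleRoot_nonneg s⟩

lemma IsAdapted.isLiftingChamber_rotate (hl : (s :: l).Nodup) (hu : IsAdapted cs (s :: l) β u)
    (hspan : β ∈ simpleSpan (s :: l))
    (hβ : IsPosRootOf cs (cs.simple s * t * cs.simple s) (simpleReflection M s β)) :
    IsLiftingChamber cs (l ++ [s]) (cs.simple s * t * cs.simple s) (cs.simple s * u) := by
  intro β' hβ' α hα h0 ht
  obtain rfl := hβ'.unique hβ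
  have hαspan : α ∈ simpleSpan (s :: l) := mem_simpleSpan.mpr fun j hj => hβ.coord_eq_zero h0 ht <|
    mem_simpleSpan.mp (simpleReflection_mem_simpleSpan List.mem_cons_self hspan) j hj
  have hω : orderForm M (l ++ [s]) α (simpleReflection M s β) =
      orderForm M (s :: l) (simpleReflection M s α) β := by
    rw [← orderForm_rotate hl (simpleReflection_mem_simpleSpan List.mem_cons_self hαspan) hspan,
      simpleReflection_simpleReflection]
  have hpos : 0 < rootForm M (simpleReflection M s α) β := by
    rw [← rootForm_simpleReflection s, simpleReflection_simpleReflection]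
    exact hβ.rootForm_pos hα h0 ht
  rw [hω, mul_inv_rev, inv_simple, geomRep_mul_apply, geomRep_simple]
  exact hu.nonneg_iff (hα.simpleReflection_apply s) hpos

lemma reflectionLift_rotate [Finite W] (hl : (s :: l).Nodup) (hβ : IsPosRootOf cs t β)
    (hspan : β ∈ simpleSpan (s :: l)) :
    reflectionLift cs (l ++ [s]) (cs.simple s * t * cs.simple s) =
      (artinGen M s)⁻¹ * reflectionLift cs (s :: l) t * artinGen M s := by
  obtain rfl | hne := eq_or_ne β (simpleRoot s)
  · obtain rfl := hβ.reflection_eq (isPosRootOf_simple s)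
    rw [simple_mul_simple_cancel_right, reflectionLift_simple, reflectionLift_simple,
      inv_mul_cancel, one_mul]
  have hs0 : 0 ≤ simpleReflection M s β := hβ.isRoot.simpleReflection_nonneg hβ.nonneg hne
  have hβ' : IsPosRootOf cs (cs.simple s * t * cs.simple s) (simpleReflection M s β) := by
    simpa using hβ.conj (w := cs.simple s) (by simpa using hs0)
  obtain ⟨u, hu⟩ := exists_isAdapted cs (s :: l) β
  have hdesc {w : W} (h : geomRep cs w⁻¹ (simpleRoot s) ≤ 0) : cs.IsLeftDescent w s :=
    of_not_not fun hn => ((isRoot_simpleRoot s).geomRep_apply w⁻¹).not_nonneg_iff.mpr h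
      (geomRep_inv_simpleRoot_nonneg_iff.mpr hn)
  have hmul : cs.simple s * t * cs.simple s * (cs.simple s * u) = cs.simple s * (t * u) := by
    simp [mul_assoc]
  rw [(hu.isLiftingChamber_rotate hl hspan hβ').reflectionLift_eq hβ', hmul,
    (hu.isLiftingChamber hβ).reflectionLift_eq hβ, posLift_simple_mul_of_isLeftDescent cs
      (hdesc (hu.geomRep_mul_inv_simpleRoot_nonpos hl hspan hβ hs0)),
    posLift_simple_mul_of_isLeftDescent cs
      (hdesc (hu.geomRep_inv_simpleRoot_nonpos hl hspan hβ.nonneg hs0))]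
  group

end Lifts

/-! ### Reflection factorizations of parabolic Coxeter elements -/

section MovedSpace

variable {cs : CoxeterSystem M W} {l : List B} {y : B →₀ ℝ}

-- Averaging over the stabilizer of `y` fixes `y` but kills the simple roots in `l`.
lemma eq_zero_of_rootForm_eq_zero [Finite W] (cs : CoxeterSystem M W) (hy : y ∈ simpleSpan l)
    (h : ∀ i ∈ l, rootForm M (simpleRoot i) y = 0) : y = 0 := by
  set H : Subgroup W :=
    (MulAction.stabilizer ((B →₀ ℝ) ≃ₗ[ℝ] (B →₀ ℝ)) y).comap (geomRep cs)
  have := Fintype.ofFinite H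
  set A : Module.End ℝ (B →₀ ℝ) := ∑ g : H, (geomRep cs (g : W)).toLinearMap
  have hA (x : B →₀ ℝ) : A x = ∑ g : H, geomRep cs (g : W) x := LinearMap.sum_apply _ _ _
  have hmem (i : B) (hi : i ∈ l) : cs.simple i ∈ H := by
    change geomRep cs (cs.simple i) y = y
    rw [geomRep_simple, simpleReflection_apply, h i hi, mul_zero, zero_smul, sub_zero]
  have hkill (i : B) (hi : i ∈ l) : A (simpleRoot i) = 0 := by
    have hneg : A (-simpleRoot i) = A (simpleRoot i) := by
      rw [hA, hA]
      refine Fintype.sum_equiv (Equiv.mulRight (⟨cs.simple i, hmem i hi⟩ : H)) _ _ fun g => ?_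
      rw [← simpleReflection_self (M := M), ← geomRep_simple cs, ← geomRep_mul_apply]
      rfl
    rw [map_neg] at hneg
    exact self_eq_neg.mp hneg.symm
  have hAy : A y = 0 := by
    rw [← Finsupp.sum_single y, Finsupp.sum, map_sum]
    refine Finset.sum_eq_zero fun i hi => ?_
    rw [← mul_one (y i), ← Finsupp.smul_single', map_smul, ← simpleRoot, hkill i (hy hi), smul_zero]
  have hcard : A y = Fintype.card H • y := by
    rw [hA, Finset.sum_congr rfl fun g _ => g.2, Finset.sum_const, Finset.card_univ]
  exact (smul_eq_zero.mp (hcard.symm.trans hAy)).resolve_left Fintype.card_ne_zero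

variable (cs) in
lemma geomRep_wordProd_coord (l : List B) (y : B →₀ ℝ) {j : B} (hj : j ∉ l) :
    geomRep cs (cs.wordProd l) y j = y j := by
  induction l with
  | nil => simp
  | cons s l ih =>
    rw [List.mem_cons, not_or] at hj
    rw [wordProd_cons, geomRep_mul_apply, geomRep_simple, simpleReflection_coord hj.1, ih hj.2]

variable (cs) in
lemma geomRep_wordProd_mem_simpleSpan_iff (l : List B) :
    geomRep cs (cs.wordProd l) y ∈ simpleSpan l ↔ y ∈ simpleSpan l := by
  simp +contextual [mem_simpleSpan, geomRep_wordProd_coord cs l y]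

lemma rootForm_eq_zero_of_fixed (hl : l.Nodup) (h : geomRep cs (cs.wordProd l) y = y) :
    ∀ i ∈ l, rootForm M (simpleRoot i) y = 0 := by
  induction l with
  | nil => simp
  | cons s l ih =>
    rw [wordProd_cons, geomRep_mul_apply, geomRep_simple, simpleReflection_apply] at h
    have hs := DFunLike.congr_fun h s
    simp only [Finsupp.sub_apply, Finsupp.smul_apply, simpleRoot_self, smul_eq_mul, mul_one,
      geomRep_wordProd_coord cs l y hl.notMem] at hs
    have hzero : rootForm M (simpleRoot s) (geomRep cs (cs.wordProd l) y) = 0 := by linarith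
    rw [hzero, mul_zero, zero_smul, sub_zero] at h
    rw [h] at hzero
    exact List.forall_mem_cons.mpr ⟨hzero, ih hl.of_cons h⟩

lemma eq_zero_of_fixed [Finite W] (hl : l.Nodup) (hy : y ∈ simpleSpan l)
    (h : geomRep cs (cs.wordProd l) y = y) : y = 0 :=
  eq_zero_of_rootForm_eq_zero cs hy (rootForm_eq_zero_of_fixed hl h)

lemma finrank_simpleSpan (hl : l.Nodup) : Module.finrank ℝ (simpleSpan l) = l.length := by
  have : Fintype {i | i ∈ l} := l.finite_toSet.fintype
  rw [simpleSpan, (Finsupp.supportedEquivFinsupp {i | i ∈ l}).finrank_eq,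
    Module.finrank_finsupp_self, ← Nat.card_eq_fintype_card, Nat.card_coe_set_eq]
  classical
  rw [← List.coe_toFinset, Set.ncard_coe_finset, List.toFinset_card_of_nodup hl]

lemma exists_geomRep_wordProd_sub_eq [Finite W] (hl : l.Nodup) {x : B →₀ ℝ}
    (hx : x ∈ simpleSpan l) : ∃ y, geomRep cs (cs.wordProd l) y - y = x := by
  have := Finite.of_injective _ (simple_injective cs)
  set D : Module.End ℝ (B →₀ ℝ) := (geomRep cs (cs.wordProd l)).toLinearMap - 1
  have hmaps (y) (hy : y ∈ simpleSpan l) : D y ∈ simpleSpan l :=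
    sub_mem ((geomRep_wordProd_mem_simpleSpan_iff cs l).mpr hy) hy
  have hinj : Function.Injective (D.restrict hmaps) := by
    refine (injective_iff_map_eq_zero _).mpr fun y hy => Subtype.ext ?_
    exact eq_zero_of_fixed hl y.2 (sub_eq_zero.mp (congrArg Subtype.val hy))
  obtain ⟨y, hy⟩ := (LinearMap.injective_iff_surjective (V := simpleSpan l)).mp hinj ⟨x, hx⟩
  exact ⟨y, congrArg Subtype.val hy⟩

variable {ts : List W}

variable (cs) in
/-- The span of the roots of the reflections occurring in `ts`. -/
noncomputable def rootSpan (ts : List W) : Submodule ℝ (B →₀ ℝ) :=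
  Submodule.span ℝ {β | ∃ t ∈ ts, IsPosRootOf cs t β}

lemma geomRep_prod_sub_mem_rootSpan (hts : ∀ t ∈ ts, cs.IsReflection t) (x : B →₀ ℝ) :
    geomRep cs ts.prod x - x ∈ rootSpan cs ts := by
  induction ts with
  | nil => simp
  | cons t ts ih =>
    rw [List.forall_mem_cons] at hts
    obtain ⟨β, hβ⟩ := exists_isPosRootOf hts.1
    have hsub : geomRep cs (t :: ts).prod x - x = (geomRep cs ts.prod x - x) -
        (2 * rootForm M β (geomRep cs ts.prod x)) • β := by
      rw [List.prod_cons, geomRep_mul_apply, hβ.geomRep_apply]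
      module
    rw [hsub]
    refine sub_mem (Submodule.span_mono ?_ (ih hts.2)) (Submodule.smul_mem _ _ ?_)
    · exact fun β' ⟨t', ht', hβ'⟩ => ⟨t', List.mem_cons_of_mem t ht', hβ'⟩
    · exact Submodule.subset_span ⟨t, List.mem_cons_self, hβ⟩

lemma finrank_rootSpan_le (hts : ∀ t ∈ ts, cs.IsReflection t) :
    Module.finrank ℝ (rootSpan cs ts) ≤ ts.length := by
  choose root hroot using fun k : Fin ts.length => exists_isPosRootOf (hts _ (ts.get_mem k))
  have hrange : {β | ∃ t ∈ ts, IsPosRootOf cs t β} = Set.range root := by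
    ext β
    constructor
    · rintro ⟨t, ht, hβ⟩
      obtain ⟨k, rfl⟩ := List.get_of_mem ht
      exact ⟨k, (hroot k).unique hβ⟩
    · rintro ⟨k, rfl⟩
      exact ⟨_, ts.get_mem k, hroot k⟩
  rw [rootSpan, hrange]
  exact (finrank_range_le_card root).trans_eq (Fintype.card_fin _)

lemma simpleSpan_le_rootSpan [Finite W] (hl : l.Nodup) (hts : ∀ t ∈ ts, cs.IsReflection t)
    (hprod : ts.prod = cs.wordProd l) : simpleSpan l ≤ rootSpan cs ts := by
  intro x hx
  obtain ⟨y, rfl⟩ := exists_geomRep_wordProd_sub_eq (cs := cs) hl hx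
  rw [← hprod]
  exact geomRep_prod_sub_mem_rootSpan hts y

lemma length_le_of_prod_eq_wordProd [Finite W] (hl : l.Nodup)
    (hts : ∀ t ∈ ts, cs.IsReflection t) (hprod : ts.prod = cs.wordProd l) :
    l.length ≤ ts.length := by
  have := Finite.of_injective _ (simple_injective cs)
  rw [← finrank_simpleSpan hl]
  exact (Submodule.finrank_mono (simpleSpan_le_rootSpan hl hts hprod)).trans
    (finrank_rootSpan_le hts)

variable (cs) in
/-- `ts` is a factorization of the parabolic Coxeter element `cs.wordProd l` into the minimal
number of reflections. -/
structure IsReflectionFactorization (l : List B) (ts : List W) : Prop where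
  isReflection : ∀ t ∈ ts, cs.IsReflection t
  length_eq : ts.length = l.length
  prod_eq : ts.prod = cs.wordProd l

namespace IsReflectionFactorization

lemma mem_simpleSpan [Finite W] (h : IsReflectionFactorization cs l ts) (hl : l.Nodup) {t : W}
    (ht : t ∈ ts) {β : B →₀ ℝ} (hβ : IsPosRootOf cs t β) : β ∈ simpleSpan l := by
  have := Finite.of_injective _ (simple_injective cs)
  have heq : simpleSpan l = rootSpan cs ts := by
    refine Submodule.eq_of_le_of_finrank_le (simpleSpan_le_rootSpan hl h.isReflection h.prod_eq) ?_
    rw [finrank_simpleSpan hl, ← h.length_eq]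
    exact finrank_rootSpan_le h.isReflection
  rw [heq]
  exact Submodule.subset_span ⟨t, ht, hβ⟩

lemma of_simple_cons {s : B} (h : IsReflectionFactorization cs (s :: l) (cs.simple s :: ts)) :
    IsReflectionFactorization cs l ts where
  isReflection := (List.forall_mem_cons.mp h.isReflection).2
  length_eq := by simpa using h.length_eq
  prod_eq := by
    rw [← mul_right_inj (cs.simple s), ← List.prod_cons, h.prod_eq, wordProd_cons]

lemma rotate {s : B} (h : IsReflectionFactorization cs (s :: l) ts) :
    IsReflectionFactorization cs (l ++ [s])
      (ts.map fun t => cs.simple s * t * cs.simple s) where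
  isReflection := by
    rw [List.forall_mem_map]
    exact fun t ht => by simpa using (h.isReflection t ht).conj (cs.simple s)
  length_eq := by simpa using h.length_eq
  prod_eq := by
    have hconj : (fun t => cs.simple s * t * cs.simple s) = MulAut.conj (cs.simple s) := by
      ext t
      simp
    rw [hconj, ← map_list_prod, h.prod_eq]
    simp [wordProd_cons, wordProd_append]

end IsReflectionFactorization

end MovedSpace

section Rotation

variable {cs : CoxeterSystem M W} {l : List B} {β : B →₀ ℝ}

variable (M) in
/-- Rotating the word `s :: l` to `l ++ [s]` while applying `s` to the vector `β`, one eventually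
meets the situation where `β` is the simple root of the first letter of the word. -/
inductive RotatesToHead : List B → (B →₀ ℝ) → Prop
  | head (s : B) (l : List B) : RotatesToHead (s :: l) (simpleRoot s)
  | rotate (s : B) (l : List B) (β : B →₀ ℝ) :
      RotatesToHead (l ++ [s]) (simpleReflection M s β) → RotatesToHead (s :: l) β

lemma not_rotatesToHead_rotate (p q : List B) (hβ : IsRoot cs β) (h0 : 0 ≤ β)
    (h : ¬ RotatesToHead M (p ++ q) β) :
    0 ≤ geomRep cs (cs.wordProd p)⁻¹ β ∧
      ¬ RotatesToHead M (q ++ p) (geomRep cs (cs.wordProd p)⁻¹ β) := by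
  induction p generalizing q β with
  | nil => simpa using ⟨h0, h⟩
  | cons s p ih =>
    have hne : β ≠ simpleRoot s := by
      rintro rfl
      exact h (.head _ _)
    have hrot := ih (q ++ [s]) (hβ.simpleReflection_apply s) (hβ.simpleReflection_nonneg h0 hne)
      fun hc => h (.rotate _ _ _ (by simpa using hc))
    simpa [wordProd_cons, geomRep_mul_apply] using hrot

lemma geomRep_sum_pow_orderOf (c : W) (x : B →₀ ℝ) :
    geomRep cs c (∑ k ∈ Finset.range (orderOf c), geomRep cs (c ^ k) x) =
      ∑ k ∈ Finset.range (orderOf c), geomRep cs (c ^ k) x := by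
  have hsucc := Finset.sum_range_succ (fun k => geomRep cs (c ^ k) x) (orderOf c)
  rw [Finset.sum_range_succ', pow_zero, pow_orderOf_eq_one] at hsucc
  rw [map_sum]
  simpa only [← geomRep_mul_apply, ← pow_succ'] using add_right_cancel hsucc

-- Otherwise the orbit of `β` under the Coxeter element would consist of positive roots, and its
-- sum would be a nonzero fixed vector.
lemma rotatesToHead_of_isRoot [Finite W] (hl : l.Nodup) (hβ : IsRoot cs β) (h0 : 0 ≤ β)
    (hspan : β ∈ simpleSpan l) : RotatesToHead M l β := by
  by_contra hnot
  set c := (cs.wordProd l)⁻¹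
  have horbit (k : ℕ) : 0 ≤ geomRep cs (c ^ k) β ∧ ¬ RotatesToHead M l (geomRep cs (c ^ k) β) ∧
      geomRep cs (c ^ k) β ∈ simpleSpan l := by
    induction k with
    | zero => simpa using ⟨h0, hnot, hspan⟩
    | succ k ih =>
      obtain ⟨hpos, hnext⟩ :=
        not_rotatesToHead_rotate l [] (hβ.geomRep_apply (c ^ k)) ih.1 (by simpa using ih.2.1)
      rw [List.nil_append] at hnext
      rw [pow_succ', geomRep_mul_apply]
      refine ⟨hpos, hnext, ?_⟩
      rw [← geomRep_wordProd_mem_simpleSpan_iff cs l, geomRep_apply_inv_apply]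
      exact ih.2.2
  set y := ∑ k ∈ Finset.range (orderOf c), geomRep cs (c ^ k) β
  have hfix : geomRep cs (cs.wordProd l) y = y := by
    have hc : geomRep cs c y = y := geomRep_sum_pow_orderOf c β
    rw [← hc]
    exact (geomRep_apply_inv_apply cs (cs.wordProd l) y).trans hc.symm
  have hy : y = 0 := eq_zero_of_fixed hl (Submodule.sum_mem _ fun k _ => (horbit k).2.2) hfix
  have hle : β ≤ y := by
    have hterm := Finset.single_le_sum (f := fun k => geomRep cs (c ^ k) β)
      (fun k _ => (horbit k).1) (Finset.mem_range.mpr (orderOf_pos c))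
    rwa [pow_zero, geomRep_one_apply] at hterm
  exact hβ.not_nonneg_iff.mpr (hle.trans_eq hy) h0

end Rotation

section LiftedFactorization

variable {cs : CoxeterSystem M W} {l : List B} {s : B} {ts : List W}

lemma IsReflectionFactorization.prod_map_reflectionLift_cons [Finite W] (hl : (s :: l).Nodup)
    (h : IsReflectionFactorization cs (s :: l) (cs.simple s :: ts))
    (htail : (ts.map (reflectionLift cs l)).prod = (l.map (artinGen M)).prod) :
    ((cs.simple s :: ts).map (reflectionLift cs (s :: l))).prod =
      ((s :: l).map (artinGen M)).prod := by
  have hcongr : ts.map (reflectionLift cs (s :: l)) = ts.map (reflectionLift cs l) := by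
    refine List.map_congr_left fun t ht => ?_
    obtain ⟨β, hβ⟩ := exists_isPosRootOf (h.of_simple_cons.isReflection t ht)
    exact reflectionLift_cons hl.notMem hβ (h.of_simple_cons.mem_simpleSpan hl.of_cons ht hβ)
  rw [List.map_cons, List.prod_cons, reflectionLift_simple, hcongr, htail, List.map_cons,
    List.prod_cons]

lemma IsReflectionFactorization.prod_map_reflectionLift_rotate [Finite W] (hl : (s :: l).Nodup)
    (h : IsReflectionFactorization cs (s :: l) ts)
    (hrot : ((ts.map fun t => cs.simple s * t * cs.simple s).map
      (reflectionLift cs (l ++ [s]))).prod = ((l ++ [s]).map (artinGen M)).prod) :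
    (ts.map (reflectionLift cs (s :: l))).prod = ((s :: l).map (artinGen M)).prod := by
  have hconj : (ts.map fun t => cs.simple s * t * cs.simple s).map (reflectionLift cs (l ++ [s])) =
      (ts.map (reflectionLift cs (s :: l))).map (MulAut.conj (artinGen M s)⁻¹) := by
    rw [List.map_map, List.map_map]
    refine List.map_congr_left fun t ht => ?_
    obtain ⟨β, hβ⟩ := exists_isPosRootOf (h.isReflection t ht)
    simpa using reflectionLift_rotate hl hβ (h.mem_simpleSpan hl ht hβ)
  rw [hconj, ← map_list_prod, MulAut.conj_apply, inv_inv, List.map_append, List.prod_append,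
    List.map_singleton, List.prod_singleton, mul_left_inj, inv_mul_eq_iff_eq_mul] at hrot
  rw [hrot, List.map_cons, List.prod_cons]

lemma RotatesToHead.prod_map_reflectionLift [Finite W] {β : B →₀ ℝ} (hrot : RotatesToHead M l β)
    (ih : ∀ l' ts', l'.length < l.length → l'.Nodup → IsReflectionFactorization cs l' ts' →
      (ts'.map (reflectionLift cs l')).prod = (l'.map (artinGen M)).prod)
    {t : W} (hβ : IsPosRootOf cs t β) (hl : l.Nodup)
    (h : IsReflectionFactorization cs l (t :: ts)) :
    ((t :: ts).map (reflectionLift cs l)).prod = (l.map (artinGen M)).prod := by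
  have hhead {s : B} {l : List B} (ih : ∀ l' ts', l'.length < (s :: l).length → l'.Nodup →
      IsReflectionFactorization cs l' ts' →
      (ts'.map (reflectionLift cs l')).prod = (l'.map (artinGen M)).prod)
      {t : W} {ts : List W} (hβ : IsPosRootOf cs t (simpleRoot s)) (hl : (s :: l).Nodup)
      (h : IsReflectionFactorization cs (s :: l) (t :: ts)) :
      ((t :: ts).map (reflectionLift cs (s :: l))).prod = ((s :: l).map (artinGen M)).prod := by
    obtain rfl := hβ.reflection_eq (isPosRootOf_simple s)
    exact h.prod_map_reflectionLift_cons hl (ih l ts (by simp) hl.of_cons h.of_simple_cons)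
  induction hrot generalizing t ts with
  | head s l => exact hhead ih hβ hl h
  | rotate s l β _ ihrot =>
    obtain rfl | hne := eq_or_ne β (simpleRoot s)
    · exact hhead ih hβ hl h
    have hβ' : IsPosRootOf cs (cs.simple s * t * cs.simple s) (simpleReflection M s β) := by
      simpa using hβ.conj (w := cs.simple s)
        (by simpa using hβ.isRoot.simpleReflection_nonneg hβ.nonneg hne)
    have hl' : (l ++ [s]).Nodup := by simpa using List.nodup_append_comm.mp hl
    exact h.prod_map_reflectionLift_rotate hl
      (ihrot (fun l' ts' hlen => ih l' ts' (by simpa using hlen)) hβ' hl' h.rotate)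

theorem IsReflectionFactorization.prod_map_reflectionLift [Finite W]
    (h : IsReflectionFactorization cs l ts) (hl : l.Nodup) :
    (ts.map (reflectionLift cs l)).prod = (l.map (artinGen M)).prod := by
  induction hn : l.length using Nat.strong_induction_on generalizing l ts with
  | _ n ih =>
    cases ts with
    | nil =>
      obtain rfl := List.length_eq_zero_iff.mp h.length_eq.symm
      rfl
    | cons t ts =>
      obtain ⟨β, hβ⟩ := exists_isPosRootOf (h.isReflection t List.mem_cons_self)
      exact (rotatesToHead_of_isRoot hl hβ.isRoot hβ.nonneg
        (h.mem_simpleSpan hl List.mem_cons_self hβ)).prod_map_reflectionLift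
        (fun l' ts' hlt hl' h' => ih _ (hn ▸ hlt) h' hl' rfl) hβ hl h

end LiftedFactorization

/-! ### Reflection length -/

section ReflectionLength

variable (cs : CoxeterSystem M W)

lemma exists_rlen (w : W) :
    ∃ ts : List W, (∀ t ∈ ts, cs.IsReflection t) ∧ ts.length = rlen cs w ∧ ts.prod = w := by
  refine Nat.sInf_mem (s := {k | ∃ l : List W, (∀ t ∈ l, cs.IsReflection t) ∧ l.length = k ∧
    l.prod = w}) ?_
  obtain ⟨l, -, rfl⟩ := cs.exists_isReduced w
  exact ⟨_, l.map cs.simple, List.forall_mem_map.mpr fun i _ => cs.isReflection_simple i, rfl, rfl⟩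

variable {cs}

lemma rlen_prod_le {ts : List W} (hts : ∀ t ∈ ts, cs.IsReflection t) :
    rlen cs ts.prod ≤ ts.length :=
  Nat.sInf_le ⟨ts, hts, rfl, rfl⟩

variable (cs)

@[simp] lemma rlen_one : rlen cs 1 = 0 :=
  Nat.le_zero.mp (rlen_prod_le (cs := cs) (ts := []) (by simp))

lemma rlen_mul_le (u v : W) : rlen cs (u * v) ≤ rlen cs u + rlen cs v := by
  obtain ⟨ts, hts, hlen, rfl⟩ := exists_rlen cs u
  obtain ⟨ts', hts', hlen', rfl⟩ := exists_rlen cs v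
  rw [← hlen, ← hlen', ← List.prod_append, ← List.length_append]
  exact rlen_prod_le (List.forall_mem_append.mpr ⟨hts, hts'⟩)

lemma rlen_conj_le (x w : W) : rlen cs (x * w * x⁻¹) ≤ rlen cs w := by
  obtain ⟨ts, hts, hlen, rfl⟩ := exists_rlen cs w
  rw [← MulAut.conj_apply, map_list_prod, ← hlen, ← List.length_map (MulAut.conj x)]
  exact rlen_prod_le (List.forall_mem_map.mpr fun t ht => (hts t ht).conj x)

@[simp] lemma rlen_conj (x w : W) : rlen cs (x * w * x⁻¹) = rlen cs w := by
  refine (rlen_conj_le cs x w).antisymm ?_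
  simpa [mul_assoc] using rlen_conj_le cs x⁻¹ (x * w * x⁻¹)

variable {cs} {t u v w γ : W}

lemma eq_one_of_rlen_eq_zero (h : rlen cs w = 0) : w = 1 := by
  obtain ⟨ts, -, hlen, rfl⟩ := exists_rlen cs w
  rw [List.eq_nil_of_length_eq_zero (hlen.trans h), List.prod_nil]

lemma isReflection_of_rlen_eq_one (h : rlen cs w = 1) : cs.IsReflection w := by
  obtain ⟨ts, hts, hlen, rfl⟩ := exists_rlen cs w
  obtain ⟨t, rfl⟩ := List.length_eq_one_iff.mp (hlen.trans h)
  simpa using hts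

lemma rlen_eq_one (ht : cs.IsReflection t) : rlen cs t = 1 := by
  refine le_antisymm (by simpa using rlen_prod_le (ts := [t]) (by simpa using ht)) ?_
  refine Nat.one_le_iff_ne_zero.mpr fun h => ?_
  simpa [eq_one_of_rlen_eq_zero h] using ht.odd_length

lemma rlen_mul_eq_two (ht : cs.IsReflection t) (hu : cs.IsReflection u) (hne : t ≠ u) :
    rlen cs (t * u) = 2 := by
  have hle := rlen_mul_le cs t u
  rw [rlen_eq_one ht, rlen_eq_one hu] at hle
  have h0 : rlen cs (t * u) ≠ 0 := fun h =>
    hne (by rw [mul_eq_one_iff_eq_inv.mp (eq_one_of_rlen_eq_zero h), hu.inv])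
  have h1 : rlen cs (t * u) ≠ 1 := fun h => by
    have hodd := Nat.odd_iff.mp (isReflection_of_rlen_eq_one h).odd_length
    have := Nat.odd_iff.mp ht.odd_length
    have := Nat.odd_iff.mp hu.odd_length
    rw [cs.length_mul_mod_two] at hodd
    omega
  omega

lemma rle_iff_le : rle cs w γ ↔ rlen cs w + rlen cs (w⁻¹ * γ) ≤ rlen cs γ := by
  have hge := rlen_mul_le cs w (w⁻¹ * γ)
  rw [mul_inv_cancel_left] at hge
  exact ⟨fun h => h.ge, hge.antisymm⟩

lemma one_rle (γ : W) : rle cs 1 γ := by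
  simp [rle]

lemma rle_conj (h : rle cs w γ) (x : W) : rle cs (x * w * x⁻¹) (x * γ * x⁻¹) := by
  have heq : (x * w * x⁻¹)⁻¹ * (x * γ * x⁻¹) = x * (w⁻¹ * γ) * x⁻¹ := by group
  rw [rle, heq, rlen_conj, rlen_conj, rlen_conj, h]

lemma rle_of_mul_left (h : rlen cs u + rlen cs v = rlen cs (u * v)) (hγ : rle cs (u * v) γ) :
    rle cs u γ := by
  rw [rle_iff_le] at hγ ⊢
  have hle := rlen_mul_le cs v ((u * v)⁻¹ * γ)
  have heq : v * ((u * v)⁻¹ * γ) = u⁻¹ * γ := by group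
  rw [heq] at hle
  omega

lemma rle_of_mul_right (h : rlen cs u + rlen cs v = rlen cs (u * v)) (hγ : rle cs (u * v) γ) :
    rle cs v γ := by
  rw [rle_iff_le] at hγ ⊢
  have hle := rlen_mul_le cs (v⁻¹ * u * v⁻¹⁻¹) ((u * v)⁻¹ * γ)
  have heq : (v⁻¹ * u * v⁻¹⁻¹) * ((u * v)⁻¹ * γ) = v⁻¹ * γ := by group
  rw [heq, rlen_conj] at hle
  omega

lemma rlen_wordProd [Finite W] (cs : CoxeterSystem M W) {l : List B} (hl : l.Nodup) :
    rlen cs (cs.wordProd l) = l.length := by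
  apply le_antisymm
  · simpa [wordProd] using rlen_prod_le (ts := l.map cs.simple)
      (List.forall_mem_map.mpr fun i _ => cs.isReflection_simple i)
  · obtain ⟨ts, hts, hlen, hprod⟩ := exists_rlen cs (cs.wordProd l)
    exact (length_le_of_prod_eq_wordProd hl hts hprod).trans_eq hlen

lemma exists_wordProd_eq_mul_prod (cs : CoxeterSystem M W) {l' l : List B} (h : l'.Sublist l) :
    ∃ ts : List W, (∀ t ∈ ts, cs.IsReflection t) ∧ ts.length + l'.length = l.length ∧
      cs.wordProd l = cs.wordProd l' * ts.prod := by
  induction h with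
  | slnil => exact ⟨[], by simp⟩
  | @cons l' l a _ ih =>
    obtain ⟨ts, hts, hlen, hprod⟩ := ih
    refine ⟨(cs.wordProd l')⁻¹ * cs.simple a * (cs.wordProd l')⁻¹⁻¹ :: ts,
      List.forall_mem_cons.mpr ⟨(cs.isReflection_simple a).conj _, hts⟩, ?_, ?_⟩
    · rw [List.length_cons, List.length_cons]
      omega
    · rw [wordProd_cons, hprod, List.prod_cons]
      group
  | @cons_cons l' l a _ ih =>
    obtain ⟨ts, hts, hlen, hprod⟩ := ih
    refine ⟨ts, hts, by rw [List.length_cons, List.length_cons]; omega, ?_⟩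
    rw [wordProd_cons, hprod, wordProd_cons, mul_assoc]

lemma rle_wordProd_of_sublist [Finite W] (cs : CoxeterSystem M W) {l' l : List B} (hl : l.Nodup)
    (h : l'.Sublist l) : rle cs (cs.wordProd l') (cs.wordProd l) := by
  obtain ⟨ts, hts, hlen, hprod⟩ := exists_wordProd_eq_mul_prod cs h
  rw [rle_iff_le, rlen_wordProd cs hl, rlen_wordProd cs (hl.sublist h), hprod, inv_mul_cancel_left]
  have := rlen_prod_le hts
  omega

end ReflectionLength

/-! ### Generators and relations of the poset group -/

section PosetGroup

variable (cs : CoxeterSystem M W) (γ : W)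

open Classical in
/-- The generator `⟨w⟩` of the poset group, extended to all of `W` by `1` outside of the interval
below `γ`. -/
noncomputable def posetGen (w : W) : PosetGroup cs γ :=
  if h : w ≠ 1 ∧ rle cs w γ then PresentedGroup.of ⟨w, h⟩ else 1

lemma posetGen_coe (w : NCGen cs γ) : posetGen cs γ w = PresentedGroup.of w :=
  dif_pos w.2

@[simp] lemma posetGen_one : posetGen cs γ 1 = 1 := by
  simp [posetGen]

variable {cs γ} {t u v : W}

lemma posetGen_mul (h : rlen cs u + rlen cs v = rlen cs (u * v)) (hγ : rle cs (u * v) γ) :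
    posetGen cs γ u * posetGen cs γ v = posetGen cs γ (u * v) := by
  obtain rfl | hu := eq_or_ne u 1
  · simp
  obtain rfl | hv := eq_or_ne v 1
  · simp
  have huv : u * v ≠ 1 := fun huv => by
    rw [huv, rlen_one, add_eq_zero] at h
    exact hu (eq_one_of_rlen_eq_zero h.1)
  rw [posetGen, dif_pos ⟨hu, rle_of_mul_left h hγ⟩, posetGen, dif_pos ⟨hv, rle_of_mul_right h hγ⟩,
    posetGen, dif_pos ⟨huv, hγ⟩, ← mul_inv_eq_one]
  exact (QuotientGroup.eq_one_iff _).mpr (Subgroup.subset_normalClosure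
    ⟨⟨u, hu, rle_of_mul_left h hγ⟩, ⟨v, hv, rle_of_mul_right h hγ⟩, ⟨u * v, huv, hγ⟩, rfl, rfl, h⟩)

lemma posetGen_prod {ts : List W} (hts : ∀ t ∈ ts, cs.IsReflection t)
    (h : ts.length = rlen cs ts.prod) (hγ : rle cs ts.prod γ) :
    posetGen cs γ ts.prod = (ts.map (posetGen cs γ)).prod := by
  induction ts with
  | nil => simp
  | cons t ts ih =>
    rw [List.forall_mem_cons] at hts
    rw [List.prod_cons] at h hγ
    have hle := rlen_mul_le cs t ts.prod
    have ht := rlen_eq_one hts.1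
    have hts_le := rlen_prod_le hts.2
    rw [List.length_cons] at h
    have hadd : rlen cs t + rlen cs ts.prod = rlen cs (t * ts.prod) := by omega
    rw [List.prod_cons, List.map_cons, List.prod_cons, ← posetGen_mul hadd hγ,
      ih hts.2 (by omega) (rle_of_mul_right hadd hγ)]

section Lift

variable {G : Type*} [Group G] {f : W → G}

/-- The homomorphism out of the poset group that is determined by a function on the interval below
`γ` which is multiplicative along length-additive products. -/
def posetLift (hf : ∀ u v, rlen cs u + rlen cs v = rlen cs (u * v) → rle cs (u * v) γ →
    f u * f v = f (u * v)) : PosetGroup cs γ →* G :=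
  PresentedGroup.toGroup (f := fun w : NCGen cs γ => f w) fun _ ⟨w₁, w₂, w₃, hx, hmul, hlen⟩ => by
    rw [← hmul] at hlen
    have hle : rle cs ((w₁ : W) * w₂) γ := hmul ▸ w₃.2.2
    simp [hx, ← hmul, hf _ _ hlen hle]

lemma posetLift_posetGen (hf : ∀ u v, rlen cs u + rlen cs v = rlen cs (u * v) →
    rle cs (u * v) γ → f u * f v = f (u * v)) (hu : rle cs u γ) :
    posetLift hf (posetGen cs γ u) = f u := by
  obtain rfl | hne := eq_or_ne u 1
  · rw [posetGen_one, map_one, eq_comm]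
    simpa using hf 1 1 (by simp) (by simpa using one_rle γ)
  · rw [posetGen, dif_pos ⟨hne, hu⟩]
    exact PresentedGroup.toGroup.of _

lemma posetGroup_hom_ext {φ ψ : PosetGroup cs γ →* G}
    (h : ∀ w, rle cs w γ → φ (posetGen cs γ w) = ψ (posetGen cs γ w)) : φ = ψ :=
  PresentedGroup.ext fun w => by simpa only [posetGen_coe] using h w w.2.2

end Lift

section Conjugation

variable {γ' x : W}

lemma posetGen_conj_mul (h : x * γ * x⁻¹ = γ') (u v : W)
    (hlen : rlen cs u + rlen cs v = rlen cs (u * v)) (hγ : rle cs (u * v) γ) :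
    posetGen cs γ' (x * u * x⁻¹) * posetGen cs γ' (x * v * x⁻¹) =
      posetGen cs γ' (x * (u * v) * x⁻¹) := by
  have hmul : x * u * x⁻¹ * (x * v * x⁻¹) = x * (u * v) * x⁻¹ := by group
  rw [posetGen_mul, hmul]
  · rw [hmul, rlen_conj, rlen_conj, rlen_conj, hlen]
  · rw [hmul, ← h]
    exact rle_conj hγ x

/-- Conjugation by `x`, as an isomorphism between the poset groups of `γ` and of its conjugate. -/
noncomputable def posetGroupConj (h : x * γ * x⁻¹ = γ') : PosetGroup cs γ ≃* PosetGroup cs γ' :=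
  have h' : x⁻¹ * γ' * x⁻¹⁻¹ = γ := by rw [← h]; group
  have hrle {w γ γ' x : W} (h : x * γ * x⁻¹ = γ') (hw : rle cs w γ) : rle cs (x * w * x⁻¹) γ' :=
    h ▸ rle_conj hw x
  MonoidHom.toMulEquiv (posetLift (posetGen_conj_mul h)) (posetLift (posetGen_conj_mul h'))
    (posetGroup_hom_ext fun w hw => by
      rw [MonoidHom.comp_apply, posetLift_posetGen _ hw, posetLift_posetGen _ (hrle h hw)]
      simp [mul_assoc])
    (posetGroup_hom_ext fun w hw => by
      rw [MonoidHom.comp_apply, posetLift_posetGen _ hw, posetLift_posetGen _ (hrle h' hw)]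
      simp [mul_assoc])

end Conjugation

section DualBraidRelations

lemma posetGen_mul_of_isReflection (ht : cs.IsReflection t) (hu : cs.IsReflection u) (hne : t ≠ u)
    (hle : rle cs (t * u) γ) : posetGen cs γ t * posetGen cs γ u = posetGen cs γ (t * u) :=
  posetGen_mul (by rw [rlen_eq_one ht, rlen_eq_one hu, rlen_mul_eq_two ht hu hne]) hle

lemma posetGen_conj (ht : cs.IsReflection t) (hu : cs.IsReflection u) (hne : t ≠ u)
    (hle : rle cs (t * u) γ) : posetGen cs γ (t * u * t⁻¹) =
      posetGen cs γ t * posetGen cs γ u * (posetGen cs γ t)⁻¹ := by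
  have hmul : t * u * t⁻¹ * t = t * u := by group
  rw [eq_mul_inv_iff_mul_eq, posetGen_mul_of_isReflection ht hu hne hle,
    posetGen_mul_of_isReflection (hu.conj t) ht, hmul]
  · rwa [ne_eq, mul_inv_eq_iff_eq_mul, mul_right_inj, eq_comm]
  · rwa [hmul]

lemma prod_map_alternatingWord_succ {N : Type*} [Monoid N] {f : B → N} {x : ℕ → N} {i j : B}
    (h0 : x 0 = f j) (hx : ∀ k, x k * x (k + 1) = f i * f j) (m : ℕ) :
    ((alternatingWord i j (m + 1)).map f).prod = ((alternatingWord i j m).map f).prod * x m := by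
  induction m with
  | zero => simp [alternatingWord, h0]
  | succ m ih =>
    rw [ih, mul_assoc, hx, alternatingWord_succ, alternatingWord_succ]
    simp

lemma prod_map_alternatingWord_eq {N : Type*} [Monoid N] {f : B → N} {x : ℕ → N} {i j : B} {m : ℕ}
    (h0 : x 0 = f j) (hx : ∀ k, x k * x (k + 1) = f i * f j) (hm : x m = f i) :
    ((alternatingWord i j (m + 1)).map f).prod = ((alternatingWord j i (m + 1)).map f).prod := by
  rw [prod_map_alternatingWord_succ h0 hx, hm, alternatingWord_succ j i]
  simp

lemma isReflection_simple_mul_pow (cs : CoxeterSystem M W) (i j : B) (k : ℕ) :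
    cs.IsReflection (cs.simple j * (cs.simple i * cs.simple j) ^ k) := by
  induction k generalizing i j with
  | zero => simpa using cs.isReflection_simple j
  | succ k ih =>
    have heq : cs.simple j * (cs.simple i * cs.simple j) ^ (k + 1) =
        cs.simple j * (cs.simple i * (cs.simple j * cs.simple i) ^ k) * (cs.simple j)⁻¹ := by
      rw [pow_succ, ← mul_assoc _ (cs.simple i), mul_pow_mul, inv_simple]
      simp only [mul_assoc]
    rw [heq]
    exact (ih j i).conj _

lemma simple_mul_simple_ne_one (cs : CoxeterSystem M W) {i j : B} (hij : i ≠ j) :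
    cs.simple i * cs.simple j ≠ 1 := by
  rw [ne_eq, mul_eq_one_iff_eq_inv, inv_simple]
  exact fun h => hij (simple_injective cs h)

-- The reflections of the dihedral group of `i` and `j`, in cyclic order, have constant products of
-- neighbours, and this is what the braid relation needs.
lemma prod_map_alternatingWord_posetGen {i j : B} (hij : i ≠ j) (hM : M i j ≠ 0)
    (hle : rle cs (cs.simple i * cs.simple j) γ) :
    ((alternatingWord i j (M i j)).map fun i => posetGen cs γ (cs.simple i)).prod =
      ((alternatingWord j i (M i j)).map fun i => posetGen cs γ (cs.simple i)).prod := by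
  obtain ⟨m, hm⟩ := Nat.exists_eq_succ_of_ne_zero hM
  set c := cs.simple i * cs.simple j
  have hrefl (k : ℕ) : cs.IsReflection (cs.simple j * c ^ k) := isReflection_simple_mul_pow cs i j k
  have hmul (k : ℕ) : cs.simple j * c ^ k * (cs.simple j * c ^ (k + 1)) = c := by
    rw [pow_succ, ← mul_assoc (cs.simple j), ← mul_assoc, (hrefl k).mul_self, one_mul]
  have hne (k : ℕ) : cs.simple j * c ^ k ≠ cs.simple j * c ^ (k + 1) := by
    rw [pow_succ, ← mul_assoc, ne_eq, left_eq_mul]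
    exact simple_mul_simple_ne_one cs hij
  rw [hm]
  refine prod_map_alternatingWord_eq (x := fun k => posetGen cs γ (cs.simple j * c ^ k))
    (by simp) (fun k => ?_) ?_
  · rw [posetGen_mul_of_isReflection (hrefl k) (hrefl (k + 1)) (hne k) (by rwa [hmul]), hmul,
      posetGen_mul_of_isReflection (cs.isReflection_simple i) (cs.isReflection_simple j)
        (fun h => hij (simple_injective cs h)) hle]
  · have hpow : c ^ (m + 1) = 1 := by
      rw [← Nat.succ_eq_add_one, ← hm]
      exact cs.simple_mul_simple_pow i j
    have hlast : cs.simple j * c ^ m = cs.simple i := by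
      rw [pow_succ, mul_eq_one_iff_eq_inv, mul_inv_rev, inv_simple, inv_simple] at hpow
      rw [hpow, simple_mul_simple_cancel_left]
    rw [hlast]

lemma pair_sublist_or_pair_sublist {α : Type*} {l : List α} {a b : α} (hab : a ≠ b) (ha : a ∈ l)
    (hb : b ∈ l) : [a, b].Sublist l ∨ [b, a].Sublist l := by
  induction l with
  | nil => exact absurd ha List.not_mem_nil
  | cons c l ih =>
    rcases List.mem_cons.mp ha with rfl | ha'
    · exact .inl ((List.singleton_sublist.mpr
        ((List.mem_cons.mp hb).resolve_left hab.symm)).cons_cons _)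
    · rcases List.mem_cons.mp hb with rfl | hb'
      · exact .inr ((List.singleton_sublist.mpr ha').cons_cons _)
      · exact (ih ha' hb').imp (·.cons _) (·.cons _)

lemma rle_simple_mul_simple [Finite W] (cs : CoxeterSystem M W) {l : List B} (hl : l.Nodup)
    {i j : B} (h : [i, j].Sublist l) : rle cs (cs.simple i * cs.simple j) (cs.wordProd l) := by
  simpa [wordProd] using rle_wordProd_of_sublist cs hl h

lemma isBraidLiftable_posetGen [Finite W] (cs : CoxeterSystem M W) {l : List B} (hl : l.Nodup)
    (hall : ∀ i, i ∈ l) :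
    IsBraidLiftable M fun i => posetGen cs (cs.wordProd l) (cs.simple i) := by
  intro i j hij hM
  rcases pair_sublist_or_pair_sublist hij (hall i) (hall j) with h | h
  · exact prod_map_alternatingWord_posetGen hij hM (rle_simple_mul_simple cs hl h)
  · rw [M.symmetric i j] at hM ⊢
    exact (prod_map_alternatingWord_posetGen hij.symm hM (rle_simple_mul_simple cs hl h)).symm

end DualBraidRelations

section Generation

-- Conjugating along the rotation process only involves dual braid relations.
lemma posetGen_mem_of_rotatesToHead [Finite W] {R : Subgroup (PosetGroup cs γ)} {l : List B}
    {β : B →₀ ℝ} (hrot : RotatesToHead M l β) {x t : W} (hl : l.Nodup) (hall : ∀ i, i ∈ l)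
    (hx : x * cs.wordProd l * x⁻¹ = γ) (hR : ∀ i, posetGen cs γ (x * cs.simple i * x⁻¹) ∈ R)
    (hβ : IsPosRootOf cs t β) : posetGen cs γ (x * t * x⁻¹) ∈ R := by
  induction hrot generalizing x t with
  | head s l =>
    obtain rfl := hβ.reflection_eq (isPosRootOf_simple s)
    exact hR s
  | rotate s l β _ ih =>
    obtain rfl | hne := eq_or_ne β (simpleRoot s)
    · obtain rfl := hβ.reflection_eq (isPosRootOf_simple s)
      exact hR s
    have hβ' : IsPosRootOf cs (cs.simple s * t * cs.simple s) (simpleReflection M s β) := by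
      simpa using hβ.conj (w := cs.simple s)
        (by simpa using hβ.isRoot.simpleReflection_nonneg hβ.nonneg hne)
    have hx' : x * cs.simple s * cs.wordProd (l ++ [s]) * (x * cs.simple s)⁻¹ = γ := by
      rw [← hx, wordProd_append, cs.wordProd_cons s l]
      simp [mul_assoc]
    have hR' (i : B) : posetGen cs γ (x * cs.simple s * cs.simple i * (x * cs.simple s)⁻¹) ∈ R := by
      obtain rfl | his := eq_or_ne i s
      · simpa [mul_assoc] using hR i
      have hsub : [s, i].Sublist (s :: l) :=
        (List.singleton_sublist.mpr ((List.mem_cons.mp (hall i)).resolve_left his)).cons_cons _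
      have hle : rle cs (x * cs.simple s * x⁻¹ * (x * cs.simple i * x⁻¹)) γ := by
        simpa [hx, mul_assoc] using rle_conj (rle_simple_mul_simple cs hl hsub) x
      have hconj := posetGen_conj ((cs.isReflection_simple s).conj x)
        ((cs.isReflection_simple i).conj x)
        (fun h => his (simple_injective cs (by simpa using h.symm))) hle
      have hmem := R.mul_mem (R.mul_mem (hR s) (hR i)) (R.inv_mem (hR s))
      rw [← hconj] at hmem
      simpa [mul_assoc] using hmem
    simpa [mul_assoc] using
      ih (by simpa using List.nodup_append_comm.mp hl) (fun i => by simpa [or_comm] using hall i)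
        hx' hR' hβ'

lemma eq_top_of_posetGen_simple_mem [Finite W] {l : List B} (hl : l.Nodup) (hall : ∀ i, i ∈ l)
    {R : Subgroup (PosetGroup cs (cs.wordProd l))}
    (hR : ∀ i, posetGen cs (cs.wordProd l) (cs.simple i) ∈ R) : R = ⊤ := by
  have hrefl (t : W) (ht : cs.IsReflection t) : posetGen cs (cs.wordProd l) t ∈ R := by
    obtain ⟨β, hβ⟩ := exists_isPosRootOf ht
    have hrot : RotatesToHead M l β :=
      rotatesToHead_of_isRoot hl hβ.isRoot hβ.nonneg (by simp [mem_simpleSpan, hall])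
    simpa using posetGen_mem_of_rotatesToHead hrot (x := 1) hl hall (by simp) (by simpa using hR) hβ
  rw [eq_top_iff, ← PresentedGroup.closure_range_of, Subgroup.closure_le]
  rintro _ ⟨w, rfl⟩
  obtain ⟨ts, hts, hlen, hprod⟩ := exists_rlen cs (w : W)
  rw [← posetGen_coe, ← hprod, posetGen_prod hts (by rw [hprod, hlen]) (by rw [hprod]; exact w.2.2)]
  exact R.list_prod_mem (List.forall_mem_map.mpr fun t ht => hrefl t (hts t ht))

end Generation

/-! ### The dual lift of the interval to the Artin group -/

section Isomorphism

variable {l : List B}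

variable (cs) in
/-- The lift of `w ≤ cs.wordProd l` to the Artin group, through any reduced factorization of `w`
into reflections. -/
noncomputable def dualLift (l : List B) (w : W) : ArtinGroup M :=
  ((exists_rlen cs w).choose.map (reflectionLift cs l)).prod

-- Complete both factorizations by the same factorization of the complement of their product.
lemma prod_map_reflectionLift_congr [Finite W] (hl : l.Nodup) {ts ts' : List W}
    (hts : ∀ t ∈ ts, cs.IsReflection t) (hts' : ∀ t ∈ ts', cs.IsReflection t)
    (hlen : ts.length = rlen cs ts.prod) (hlen' : ts'.length = ts.length)
    (hprod : ts'.prod = ts.prod) (hle : rle cs ts.prod (cs.wordProd l)) :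
    (ts'.map (reflectionLift cs l)).prod = (ts.map (reflectionLift cs l)).prod := by
  obtain ⟨us, hus, huslen, husprod⟩ := exists_rlen cs (ts.prod⁻¹ * cs.wordProd l)
  have hfactor {vs : List W} (hvs : ∀ t ∈ vs, cs.IsReflection t) (hvlen : vs.length = ts.length)
      (hvprod : vs.prod = ts.prod) : IsReflectionFactorization cs l (vs ++ us) :=
    { isReflection := List.forall_mem_append.mpr ⟨hvs, hus⟩
      length_eq := by rw [List.length_append, hvlen, hlen, huslen, ← hle, rlen_wordProd cs hl]
      prod_eq := by rw [List.prod_append, hvprod, husprod, mul_inv_cancel_left] }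
  have heq := ((hfactor hts' hlen' hprod).prod_map_reflectionLift hl).trans
    ((hfactor hts rfl rfl).prod_map_reflectionLift hl).symm
  simpa only [List.map_append, List.prod_append, mul_left_inj] using heq

lemma dualLift_prod [Finite W] (hl : l.Nodup) {ts : List W} (hts : ∀ t ∈ ts, cs.IsReflection t)
    (hlen : ts.length = rlen cs ts.prod) (hle : rle cs ts.prod (cs.wordProd l)) :
    dualLift cs l ts.prod = (ts.map (reflectionLift cs l)).prod := by
  obtain ⟨hchosen, hlen', hprod⟩ := (exists_rlen cs ts.prod).choose_spec
  exact prod_map_reflectionLift_congr hl hts hchosen hlen (hlen'.trans hlen.symm) hprod hle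

lemma dualLift_mul [Finite W] (hl : l.Nodup) (u v : W)
    (h : rlen cs u + rlen cs v = rlen cs (u * v)) (hle : rle cs (u * v) (cs.wordProd l)) :
    dualLift cs l u * dualLift cs l v = dualLift cs l (u * v) := by
  obtain ⟨ts, hts, hlen, rfl⟩ := exists_rlen cs u
  obtain ⟨ts', hts', hlen', rfl⟩ := exists_rlen cs v
  rw [dualLift_prod hl hts hlen (rle_of_mul_left h hle),
    dualLift_prod hl hts' hlen' (rle_of_mul_right h hle)]
  rw [← List.prod_append] at h hle
  rw [← ts.prod_append, dualLift_prod hl (List.forall_mem_append.mpr ⟨hts, hts'⟩)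
    (by rw [List.length_append, hlen, hlen', h]) hle, List.map_append, List.prod_append]

lemma dualLift_simple [Finite W] (hl : l.Nodup) {i : B} (hi : i ∈ l) :
    dualLift cs l (cs.simple i) = artinGen M i := by
  have hrefl := cs.isReflection_simple i
  have hle : rle cs (cs.simple i) (cs.wordProd l) := by
    simpa using rle_wordProd_of_sublist cs hl (List.singleton_sublist.mpr hi)
  rw [← reflectionLift_simple cs l i]
  simpa using
    dualLift_prod hl (ts := [cs.simple i]) (by simpa using hrefl) (by simp [rlen_eq_one hrefl])
      (by simpa using hle)

theorem nonempty_artinGroup_mulEquiv_posetGroup [Finite W] (cs : CoxeterSystem M W) (hl : l.Nodup)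
    (hall : ∀ i, i ∈ l) : Nonempty (ArtinGroup M ≃* PosetGroup cs (cs.wordProd l)) := by
  set ψ := artinLift (isBraidLiftable_posetGen cs hl hall)
  have hψ (i : B) : ψ (artinGen M i) = posetGen cs (cs.wordProd l) (cs.simple i) :=
    artinLift_artinGen _ i
  have hinv : (posetLift (dualLift_mul hl)).comp ψ = MonoidHom.id (ArtinGroup M) := by
    refine PresentedGroup.ext fun i => ?_
    have hle : rle cs (cs.simple i) (cs.wordProd l) := by
      simpa using rle_wordProd_of_sublist cs hl (List.singleton_sublist.mpr (hall i))
    change posetLift (dualLift_mul hl) (ψ (artinGen M i)) = artinGen M i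
    rw [hψ, posetLift_posetGen _ hle, dualLift_simple hl (hall i)]
  have hinj : Function.Injective ψ :=
    Function.LeftInverse.injective (g := posetLift (dualLift_mul hl)) (DFunLike.congr_fun hinv)
  have hsurj : Function.Surjective ψ := by
    rw [← MonoidHom.range_eq_top]
    exact eq_top_of_posetGen_simple_mem hl hall fun i => ⟨artinGen M i, hψ i⟩
  exact ⟨MulEquiv.ofBijective ψ ⟨hinj, hsurj⟩⟩

end Isomorphism

end PosetGroup

end DualBraid

/-- Bessis: the poset group `Γ(W,γ)` is isomorphic to the Artin group `A(W,S)`. -/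
theorem posetGroup_iso_artinGroup [Fintype B] [Fintype W] (cs : CoxeterSystem M W) (γ : W)
    (hγ : IsCoxeterElement cs γ) :
    Nonempty (PosetGroup cs γ ≃* ArtinGroup M) := by
  obtain ⟨v, l, hl, hall, rfl⟩ := hγ
  obtain ⟨e⟩ := DualBraid.nonempty_artinGroup_mulEquiv_posetGroup cs hl hall
  exact ⟨(DualBraid.posetGroupConj rfl).symm.trans e.symm⟩
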